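/- Let Ω ⊂ ℝ^N (N ≥ 3) be a bounded open set with C² boundary and suppose Φ, Φ₀, G, K, W := Φ/Φ₀ satisfy all of the hypotheses (H1)–(H7) listed in the context. Let τ be a positive Borel measure on Ω with ∫_Ω Φ dτ < ∞, let ν be a finite positive Borel measure on ∂Ω, and let u : Ω → [0,∞] be given by u(x) = ∫_Ω G(x,y) dτ(y) + ∫_{∂Ω} K(x,y) dν(y). Then there exists C ≥ 1, independent of u, τ, ν, such that C⁻¹ (∫_Ω Φ dτ + ν(∂Ω)) ≤ ∫_Ω W(x) u(x) dx ≤ C (∫_Ω Φ dτ + ν(∂Ω)). -/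

import Mathlib

open MeasureTheory Metric Set ENNReal

/-- `Ω` has `C²` boundary: near each boundary point, `Ω` coincides with the strict
sublevel set of a `C²` function with nonvanishing derivative. -/
def HasC2Boundary {N : ℕ} (Ω : Set (EuclideanSpace ℝ (Fin N))) : Prop :=
  ∀ p ∈ frontier Ω, ∃ (U : Set (EuclideanSpace ℝ (Fin N)))
    (f : EuclideanSpace ℝ (Fin N) → ℝ),
    IsOpen U ∧ p ∈ U ∧ ContDiffOn ℝ 2 f U ∧ (∀ x ∈ U, fderiv ℝ f x ≠ 0) ∧
    Ω ∩ U = {x ∈ U | f x < 0}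

theorem HasC2Boundary.exists_cone {N : ℕ} {Ω : Set (EuclideanSpace ℝ (Fin N))}
    (hΩ : HasC2Boundary Ω) {p : EuclideanSpace ℝ (Fin N)} (hp : p ∈ frontier Ω) :
    ∃ e : EuclideanSpace ℝ (Fin N), ‖e‖ = 1 ∧ ∃ ρ > 0, ∀ z ∈ Ω ∩ ball p ρ, ∀ w,
      z + w ∈ ball p ρ → ‖w‖ ≤ 7 * inner ℝ e w → z + w ∈ Ω := by
  obtain ⟨U, f, hU, hpU, hf, hf', hΩU⟩ := hΩ p hp
  have hs : HasStrictFDerivAt f (fderiv ℝ f p) p :=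
    (hf.contDiffAt (hU.mem_nhds hpU)).hasStrictFDerivAt (by norm_num)
  have hL : 0 < ‖fderiv ℝ f p‖ := norm_pos_iff.2 (hf' p hpU)
  obtain ⟨c, hc⟩ : ∃ c : NNReal, (c : ℝ) = ‖fderiv ℝ f p‖ / 7 := ⟨⟨_, by positivity⟩, rfl⟩
  obtain ⟨s, hs, happ⟩ := hs.approximates_deriv_on_nhds (c := c)
    (Or.inr (by rw [← NNReal.coe_pos, hc]; positivity))
  obtain ⟨ρ, hρ, hsub⟩ := Metric.mem_nhds_iff.1 (Filter.inter_mem hs (hU.mem_nhds hpU))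
  set v := (InnerProductSpace.toDual ℝ (EuclideanSpace ℝ (Fin N))).symm (fderiv ℝ f p) with hv
  have hvn : ‖v‖ = ‖fderiv ℝ f p‖ := by simp [hv]
  refine ⟨-(‖v‖⁻¹ • v), ?_, ρ, hρ, ?_⟩
  · rw [norm_neg, norm_smul, norm_inv, norm_norm, inv_mul_cancel₀ (by rw [hvn]; exact hL.ne')]
  · rintro z ⟨hzΩ, hz⟩ w hzw hw
    have h1 := happ _ (hsub hzw).1 _ (hsub hz).1
    rw [add_sub_cancel_left, hc, Real.norm_eq_abs] at h1
    have h2 : inner ℝ v w = fderiv ℝ f p w := by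
      simp [hv]
    rw [inner_neg_left, real_inner_smul_left, h2, hvn] at hw
    have h3 : ‖fderiv ℝ f p‖ * ‖w‖ ≤ -(7 * fderiv ℝ f p w) := by
      calc _ ≤ ‖fderiv ℝ f p‖ * (7 * -(‖fderiv ℝ f p‖⁻¹ * fderiv ℝ f p w)) := by gcongr
        _ = _ := by field_simp
    have h4 : f z < 0 := by
      have : z ∈ Ω ∩ U := ⟨hzΩ, (hsub hz).2⟩
      rw [hΩU] at this
      exact this.2
    have : z + w ∈ Ω ∩ U := by
      rw [hΩU]
      refine ⟨(hsub hzw).2, ?_⟩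
      have := (abs_le.1 h1).2
      linarith
    exact this.1

theorem ball_infDist_frontier_subset {N : ℕ} {Ω : Set (EuclideanSpace ℝ (Fin N))}
    {x : EuclideanSpace ℝ (Fin N)} (hx : x ∈ Ω) : ball x (infDist x (frontier Ω)) ⊆ Ω := by
  intro y hy
  by_contra hyΩ
  have hpos : 0 < infDist x (frontier Ω) := dist_nonneg.trans_lt hy
  have hfr : ∀ q ∈ ball x (infDist x (frontier Ω)), q ∉ frontier Ω := fun q hq hq' =>
    (infDist_le_dist_of_mem hq').not_gt (mem_ball'.1 hq)
  have hcov : ∀ q ∈ ball x (infDist x (frontier Ω)), q ∈ interior Ω ∪ (closure Ω)ᶜ := by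
    intro q hq
    by_contra h
    rw [mem_union, not_or, mem_compl_iff, not_not] at h
    exact hfr q hq ⟨h.2, h.1⟩
  have hxi := (hcov x (mem_ball_self hpos)).resolve_right (not_not.2 (subset_closure hx))
  have hye := (hcov y hy).resolve_left fun h => hyΩ (interior_subset h)
  obtain ⟨q, -, hq, hq'⟩ := (convex_ball x (infDist x (frontier Ω))).isPreconnected
    _ _ isOpen_interior isClosed_closure.isOpen_compl hcov ⟨x, mem_ball_self hpos, hxi⟩ ⟨y, hy, hye⟩
  exact hq' (subset_closure (interior_subset hq))

theorem infDist_frontier_pos {N : ℕ} {Ω : Set (EuclideanSpace ℝ (Fin N))}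
    (hΩo : IsOpen Ω) (hne : (frontier Ω).Nonempty)
    {x : EuclideanSpace ℝ (Fin N)} (hx : x ∈ Ω) : 0 < infDist x (frontier Ω) := by
  rw [← isClosed_frontier.notMem_iff_infDist_pos hne]
  exact fun h => (hΩo.inter_frontier_eq ▸ ⟨hx, h⟩ : x ∈ (∅ : Set _))

theorem le_infDist_frontier_of_ball_subset {N : ℕ} {Ω : Set (EuclideanSpace ℝ (Fin N))}
    (hΩo : IsOpen Ω) (hne : (frontier Ω).Nonempty)
    {x : EuclideanSpace ℝ (Fin N)} {r : ℝ} (h : ball x r ⊆ Ω) :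
    r ≤ infDist x (frontier Ω) := by
  rw [le_infDist hne]
  intro q hq
  by_contra! hlt
  exact (hΩo.inter_frontier_eq ▸ ⟨h (mem_ball'.2 hlt), hq⟩ : q ∈ (∅ : Set _))

/-- Near a boundary point the distance to the boundary grows at rate at least `3 / 4` in a fixed
inward direction. -/
theorem HasC2Boundary.exists_direction {N : ℕ} {Ω : Set (EuclideanSpace ℝ (Fin N))}
    (hΩ : HasC2Boundary Ω) (hΩo : IsOpen Ω)
    {p : EuclideanSpace ℝ (Fin N)} (hp : p ∈ frontier Ω) :
    ∃ e : EuclideanSpace ℝ (Fin N), ‖e‖ = 1 ∧ ∃ r > 0, ∀ x ∈ Ω ∩ ball p r,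
      ∀ s, 0 ≤ s → s ≤ 2 * r → x + s • e ∈ Ω ∧
        infDist x (frontier Ω) + 3 / 4 * s ≤ infDist (x + s • e) (frontier Ω) := by
  obtain ⟨e, he, ρ, hρ, hcone⟩ := hΩ.exists_cone hp
  refine ⟨e, he, ρ / 10, by positivity, ?_⟩
  rintro x ⟨hx, hxp⟩ s hs0 hs
  set d := infDist x (frontier Ω) with hd
  have hdpos : 0 < d := infDist_frontier_pos hΩo ⟨p, hp⟩ hx
  have hdr : d < ρ / 10 := (infDist_le_dist_of_mem hp).trans_lt hxp
  rw [mem_ball, dist_eq_norm] at hxp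
  have hball : ball (x + s • e) (d + 3 / 4 * s) ⊆ Ω := by
    intro z hz
    rw [mem_ball, dist_eq_norm] at hz
    set u := z - (x + s • e) with hu
    have hR : 0 < d + 3 / 4 * s := by positivity
    set t := d / (d + 3 / 4 * s) with ht
    have ht0 : 0 < t := by positivity
    have hts : (1 - t) * (d + 3 / 4 * s) = 3 / 4 * s := by rw [ht]; field_simp; ring
    have htd : t * (d + 3 / 4 * s) = d := by rw [ht]; field_simp
    have ht1 : 0 ≤ 1 - t := by
      by_contra! h
      nlinarith
    have hy : ‖t • u‖ < d := by
      rw [norm_smul, Real.norm_of_nonneg ht0.le, ← htd]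
      gcongr
    have hw' : ‖(1 - t) • u‖ ≤ 3 / 4 * s := by
      rw [norm_smul, Real.norm_of_nonneg ht1, ← hts]
      gcongr
    have hz' : z = (x + t • u) + (s • e + (1 - t) • u) := by
      rw [hu]; module
    have hyΩ : x + t • u ∈ Ω :=
      ball_infDist_frontier_subset hx (by simpa [mem_ball, dist_eq_norm] using hy)
    have hyp : x + t • u ∈ ball p ρ := by
      rw [mem_ball, dist_eq_norm, show x + t • u - p = (x - p) + t • u by abel]
      linarith [norm_add_le (x - p) (t • u)]
    have hse : ‖s • e‖ = s := by rw [norm_smul, he, Real.norm_of_nonneg hs0, mul_one]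
    have hzp : z ∈ ball p ρ := by
      rw [mem_ball, dist_eq_norm, show z - p = u + ((x - p) + s • e) by rw [hu]; abel]
      linarith [norm_add_le (x - p) (s • e), norm_add_le u ((x - p) + s • e)]
    rw [hz'] at hzp ⊢
    refine hcone _ ⟨hyΩ, hyp⟩ _ hzp ?_
    have h1 : inner ℝ e (s • e + (1 - t) • u) = s + inner ℝ e ((1 - t) • u) := by
      rw [inner_add_right, real_inner_smul_right, real_inner_self_eq_norm_sq, he]; ring
    have h2 := (abs_le.1 (abs_real_inner_le_norm e ((1 - t) • u))).1
    rw [he, one_mul] at h2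
    rw [h1]
    linarith [norm_add_le (s • e) ((1 - t) • u)]
  exact ⟨hball (mem_ball_self (by positivity)),
    le_infDist_frontier_of_ball_subset hΩo ⟨p, hp⟩ hball⟩

theorem exists_projection_along {N : ℕ} (hN : 1 ≤ N) {e : EuclideanSpace ℝ (Fin N)} (he : ‖e‖ = 1) :
    ∃ P : EuclideanSpace ℝ (Fin N) →L[ℝ] EuclideanSpace ℝ (Fin (N - 1)),
      (∀ x, ‖P x‖ ≤ ‖x‖) ∧ ∀ x, ‖x - inner ℝ e x • e‖ ≤ ‖P x‖ := by
  have hfact : Fact (Module.finrank ℝ (EuclideanSpace ℝ (Fin N)) = (N - 1) + 1) :=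
    ⟨by simp; omega⟩
  have hdim : Module.finrank ℝ (ℝ ∙ e)ᗮ = N - 1 :=
    Submodule.finrank_orthogonal_span_singleton (by rintro rfl; simp at he)
  let b := (stdOrthonormalBasis ℝ (ℝ ∙ e)ᗮ).reindex (finCongr hdim)
  have hb : ∀ x, ‖b.repr ((ℝ ∙ e)ᗮ.orthogonalProjectionOnto x)‖ = ‖x - inner ℝ e x • e‖ := by
    intro x
    rw [LinearIsometryEquiv.norm_map, Submodule.coe_norm,
      Submodule.coe_orthogonalProjectionOnto_apply, Submodule.starProjection_orthogonal_val,
      Submodule.starProjection_unit_singleton ℝ he]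
  refine ⟨b.repr.toContinuousLinearEquiv.toContinuousLinearMap ∘L
    (ℝ ∙ e)ᗮ.orthogonalProjectionOnto, fun x => ?_, fun x => (hb x).ge⟩
  calc _ = ‖(ℝ ∙ e)ᗮ.orthogonalProjectionOnto x‖ := b.repr.norm_map _
    _ ≤ _ := Submodule.norm_orthogonalProjectionOnto_apply_le _ _

theorem exists_smul_hausdorffMeasure {E : Type*} [NormedAddCommGroup E] [NormedSpace ℝ E]
    [FiniteDimensional ℝ E] [MeasurableSpace E] [BorelSpace E] (μ : Measure E)
    [μ.IsAddHaarMeasure] {d : ℝ} (hd : d = Module.finrank ℝ E) :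
    ∃ c : ℝ≥0∞, c ≠ 0 ∧ c ≠ ⊤ ∧ (μH[d] : Measure E) = c • μ := by
  subst hd
  refine ⟨Measure.addHaarScalarFactor μH[Module.finrank ℝ E] μ, ?_, ENNReal.coe_ne_top,
    Measure.isAddLeftInvariant_eq_smul _ _⟩
  exact_mod_cast (Measure.addHaarScalarFactor_pos_of_isAddHaarMeasure _ _).ne'

section Bilipschitz

variable {X Y : Type*} [MetricSpace X] [MeasurableSpace X] [BorelSpace X]
  [MetricSpace Y] [MeasurableSpace Y] [BorelSpace Y]

theorem setLIntegral_comp_hausdorff_le {F : X → Y} {L : Y → X} {B : Set X} {K : NNReal}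
    (hF : Measurable F) (hL : LipschitzWith K L) (hLF : ∀ x ∈ B, L (F x) = x)
    {d : ℝ} (hd : 0 ≤ d) {φ : Y → ℝ≥0∞} (hφ : Measurable φ) :
    ∫⁻ x in B, φ (F x) ∂μH[d] ≤ (K : ℝ≥0∞) ^ d * ∫⁻ y in F '' B, φ y ∂μH[d] := by
  rw [← lintegral_map hφ hF, ← smul_eq_mul, ← lintegral_smul_measure]
  refine lintegral_mono' (Measure.le_iff.2 fun S hS => ?_) le_rfl
  rw [Measure.map_apply hF hS, Measure.restrict_apply (hF hS), Measure.smul_apply,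
    Measure.restrict_apply hS]
  refine (measure_mono ?_).trans (hL.hausdorffMeasure_image_le hd _)
  rintro x ⟨hxS, hxB⟩
  exact ⟨F x, ⟨hxS, mem_image_of_mem F hxB⟩, hLF x hxB⟩

theorem setLIntegral_image_hausdorff_le {F : X → Y} {B : Set X} {K : NNReal}
    (hF : LipschitzWith K F) {d : ℝ} (hd : 0 ≤ d) {φ : Y → ℝ≥0∞} (hφ : Measurable φ) :
    ∫⁻ y in F '' B, φ y ∂μH[d] ≤ (K : ℝ≥0∞) ^ d * ∫⁻ x in B, φ (F x) ∂μH[d] := by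
  have hFm := hF.continuous.measurable
  rw [← lintegral_map hφ hFm, ← smul_eq_mul, ← lintegral_smul_measure]
  refine lintegral_mono' (Measure.le_iff.2 fun S hS => ?_) le_rfl
  rw [Measure.smul_apply, Measure.map_apply hFm hS, Measure.restrict_apply (hFm hS),
    Measure.restrict_apply hS]
  refine (measure_mono ?_).trans (hF.hausdorffMeasure_image_le hd _)
  rintro _ ⟨hxS, x, hxB, rfl⟩
  exact ⟨x, ⟨hxS, hxB⟩, rfl⟩

end Bilipschitz

/-- Straightening of the level sets of the distance function near a boundary point. -/
theorem exists_straightening {N : ℕ} (hN : 1 ≤ N) {Ω : Set (EuclideanSpace ℝ (Fin N))}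
    {p e : EuclideanSpace ℝ (Fin N)} (he : ‖e‖ = 1) {r : ℝ}
    (hmono : ∀ x ∈ Ω ∩ ball p r, ∀ s, 0 ≤ s → s ≤ 2 * r → x + s • e ∈ Ω ∧
        infDist x (frontier Ω) + 3 / 4 * s ≤ infDist (x + s • e) (frontier Ω)) :
    ∃ P : EuclideanSpace ℝ (Fin N) → EuclideanSpace ℝ (Fin (N - 1)), LipschitzWith 1 P ∧
      ∃ (K : NNReal) (L : EuclideanSpace ℝ (Fin (N - 1)) × ℝ → EuclideanSpace ℝ (Fin N)),
        LipschitzWith K L ∧ ∀ x ∈ Ω ∩ ball p r, L (P x, infDist x (frontier Ω)) = x := by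
  obtain ⟨P, hP1, hP2⟩ := exists_projection_along hN he
  set F : EuclideanSpace ℝ (Fin N) → EuclideanSpace ℝ (Fin (N - 1)) × ℝ :=
    fun x => (P x, infDist x (frontier Ω)) with hF
  have key : ∀ x ∈ Ω ∩ ball p r, ∀ x' ∈ Ω ∩ ball p r, 0 ≤ inner ℝ e (x - x') →
      dist x x' ≤ 4 * dist (F x) (F x') := by
    intro x hx x' hx' hs
    set s := inner ℝ e (x - x') with hsdef
    set v := (x - x') - s • e with hv
    have hvP : ‖v‖ ≤ dist (P x) (P x') := by
      rw [dist_eq_norm, ← map_sub]; exact hP2 _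
    have hxx' : dist x x' < 2 * r := by
      have h1 : dist x p < r := hx.2
      have h2 : dist x' p < r := hx'.2
      linarith [dist_triangle_right x x' p]
    have hs2 : s ≤ dist x x' := by
      have := (abs_le.1 (abs_real_inner_le_norm e (x - x'))).2
      rwa [he, one_mul, ← dist_eq_norm] at this
    have h1 := (hmono x' hx' s hs (hs2.trans hxx'.le)).2
    have h2 : infDist (x' + s • e) (frontier Ω) ≤ infDist x (frontier Ω) + ‖v‖ := by
      have := infDist_le_infDist_add_dist (s := frontier Ω) (x := x' + s • e) (y := x)
      rwa [dist_eq_norm, norm_sub_rev, show x - (x' + s • e) = v by rw [hv]; abel] at this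
    have h3 : dist x x' ≤ s + ‖v‖ := by
      rw [dist_eq_norm, show x - x' = s • e + v by rw [hv]; abel]
      refine (norm_add_le _ _).trans ?_
      rw [norm_smul, he, Real.norm_of_nonneg hs, mul_one]
    have h4 : dist (P x) (P x') ≤ dist (F x) (F x') := le_max_left _ _
    have h5 : dist (infDist x (frontier Ω)) (infDist x' (frontier Ω)) ≤ dist (F x) (F x') :=
      le_max_right _ _
    rw [Real.dist_eq] at h5
    have h6 := (abs_le.1 h5).2
    linarith
  have hanti : ∀ x ∈ Ω ∩ ball p r, ∀ x' ∈ Ω ∩ ball p r, dist x x' ≤ 4 * dist (F x) (F x') := by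
    intro x hx x' hx'
    rcases le_total 0 (inner ℝ e (x - x')) with h | h
    · exact key x hx x' hx' h
    · rw [dist_comm x x', dist_comm (F x)]
      refine key x' hx' x hx ?_
      rw [← neg_sub, inner_neg_right]; linarith
  have hinj : InjOn F (Ω ∩ ball p r) := fun x hx x' hx' h => by
    have := hanti x hx x' hx'
    rw [h, dist_self, mul_zero] at this
    exact dist_le_zero.1 this
  have hlip : LipschitzOnWith 4 (Function.invFunOn F (Ω ∩ ball p r)) (F '' (Ω ∩ ball p r)) := by
    refine LipschitzOnWith.of_dist_le_mul ?_
    rintro _ ⟨x, hx, rfl⟩ _ ⟨x', hx', rfl⟩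
    rw [hinj.leftInvOn_invFunOn hx, hinj.leftInvOn_invFunOn hx']
    exact hanti x hx x' hx'
  obtain ⟨L, hL, hLeq⟩ := hlip.extend_finite_dimension
  refine ⟨P, ?_, _, L, hL, fun x hx => ?_⟩
  · refine LipschitzWith.of_dist_le_mul fun x y => ?_
    rw [dist_eq_norm, dist_eq_norm, ← map_sub, NNReal.coe_one, one_mul]
    exact hP1 _
  · exact (hLeq (mem_image_of_mem F hx)).symm.trans (hinj.leftInvOn_invFunOn hx)

theorem exists_bilipschitz_comparison {X Y : Type*} [NormedAddCommGroup X] [NormedSpace ℝ X]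
    [FiniteDimensional ℝ X] [MeasurableSpace X] [BorelSpace X]
    [NormedAddCommGroup Y] [NormedSpace ℝ Y]
    [FiniteDimensional ℝ Y] [MeasurableSpace Y] [BorelSpace Y] (μ : Measure X)
    [μ.IsAddHaarMeasure] (ν : Measure Y) [ν.IsAddHaarMeasure]
    (hXY : Module.finrank ℝ X = Module.finrank ℝ Y)
    {F : X → Y} {L : Y → X} {B : Set X} {K₁ K : NNReal}
    (hF : LipschitzWith K₁ F) (hL : LipschitzWith K L) (hLF : ∀ x ∈ B, L (F x) = x) :
    ∃ C : ℝ≥0∞, C ≠ ⊤ ∧ ∀ φ : Y → ℝ≥0∞, Measurable φ →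
      ∫⁻ x in B, φ (F x) ∂μ ≤ C * ∫⁻ y in F '' B, φ y ∂ν ∧
      ∫⁻ y in F '' B, φ y ∂ν ≤ C * ∫⁻ x in B, φ (F x) ∂μ := by
  obtain ⟨c, hc0, hct, hc⟩ := exists_smul_hausdorffMeasure μ rfl
  obtain ⟨c', hc0', hct', hc'⟩ := exists_smul_hausdorffMeasure ν (congrArg Nat.cast hXY)
  set d : ℝ := (Module.finrank ℝ X : ℝ)
  have hd : 0 ≤ d := Nat.cast_nonneg _
  refine ⟨c⁻¹ * K ^ d * c' + c'⁻¹ * K₁ ^ d * c, ?_, fun φ hφ => ⟨?_, ?_⟩⟩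
  · finiteness
  · have h := setLIntegral_comp_hausdorff_le hF.continuous.measurable hL hLF hd hφ
    rw [hc, hc', Measure.restrict_smul, Measure.restrict_smul, lintegral_smul_measure,
      lintegral_smul_measure, smul_eq_mul, smul_eq_mul] at h
    calc _ = c⁻¹ * (c * ∫⁻ x in B, φ (F x) ∂μ) := by
          rw [← mul_assoc, ENNReal.inv_mul_cancel hc0 hct, one_mul]
      _ ≤ c⁻¹ * (K ^ d * (c' * ∫⁻ y in F '' B, φ y ∂ν)) := by gcongr
      _ = (c⁻¹ * K ^ d * c') * ∫⁻ y in F '' B, φ y ∂ν := by ring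
      _ ≤ _ := by gcongr; exact le_self_add
  · have h := setLIntegral_image_hausdorff_le (B := B) hF hd hφ
    rw [hc, hc', Measure.restrict_smul, Measure.restrict_smul, lintegral_smul_measure,
      lintegral_smul_measure, smul_eq_mul, smul_eq_mul] at h
    calc _ = c'⁻¹ * (c' * ∫⁻ y in F '' B, φ y ∂ν) := by
          rw [← mul_assoc, ENNReal.inv_mul_cancel hc0' hct', one_mul]
      _ ≤ c'⁻¹ * (K₁ ^ d * (c * ∫⁻ x in B, φ (F x) ∂μ)) := by gcongr
      _ = (c'⁻¹ * K₁ ^ d * c) * ∫⁻ x in B, φ (F x) ∂μ := by ring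
      _ ≤ _ := by gcongr; exact le_add_self

theorem lipschitzWith_straightening {N : ℕ} {Ω : Set (EuclideanSpace ℝ (Fin N))}
    {P : EuclideanSpace ℝ (Fin N) → EuclideanSpace ℝ (Fin (N - 1))} (hP : LipschitzWith 1 P) :
    LipschitzWith 1 fun x => (P x, infDist x (frontier Ω)) := by
  simpa using hP.prodMk (lipschitz_infDist_pt (frontier Ω))

theorem finrank_straightening {N : ℕ} (hN : 1 ≤ N) :
    Module.finrank ℝ (EuclideanSpace ℝ (Fin N)) =
      Module.finrank ℝ (EuclideanSpace ℝ (Fin (N - 1)) × ℝ) := by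
  simp; omega

/-- Local form of the coarea formula for the distance to the boundary, up to constants. -/
theorem exists_local_coarea {N : ℕ} (hN : 1 ≤ N) {Ω : Set (EuclideanSpace ℝ (Fin N))}
    (hΩo : IsOpen Ω)
    {p e : EuclideanSpace ℝ (Fin N)} (he : ‖e‖ = 1) {r : ℝ}
    (hmono : ∀ x ∈ Ω ∩ ball p r, ∀ s, 0 ≤ s → s ≤ 2 * r → x + s • e ∈ Ω ∧
        infDist x (frontier Ω) + 3 / 4 * s ≤ infDist (x + s • e) (frontier Ω)) :
    ∃ C : ℝ≥0∞, C ≠ ⊤ ∧ ∀ f : EuclideanSpace ℝ (Fin N) → ℝ≥0∞, Measurable f →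
      ∃ g : ℝ → ℝ≥0∞, Measurable g ∧
        (∀ β, g β ≤ C * ∫⁻ x in Ω ∩ ball p r ∩ {x | infDist x (frontier Ω) = β}, f x
          ∂μH[(N : ℝ) - 1]) ∧
        (∀ β, ∫⁻ x in Ω ∩ ball p r ∩ {x | infDist x (frontier Ω) = β}, f x
          ∂μH[(N : ℝ) - 1] ≤ C * g β) ∧
        ∫⁻ x in Ω ∩ ball p r, f x ≤ C * ∫⁻ β, g β ∧
        ∫⁻ β, g β ≤ C * ∫⁻ x in Ω ∩ ball p r, f x := by
  obtain ⟨P, hP, K, L, hL, hLF⟩ := exists_straightening hN he hmono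
  set B := Ω ∩ ball p r with hB
  have hBm : MeasurableSet B := hΩo.measurableSet.inter measurableSet_ball
  set F := fun x => (P x, infDist x (frontier Ω)) with hFdef
  have hF : LipschitzWith 1 F := lipschitzWith_straightening hP
  obtain ⟨C₁, hC₁, hcomp⟩ := exists_bilipschitz_comparison volume (volume.prod volume)
    (finrank_straightening hN) hF hL hLF
  have hN1 : (N : ℝ) - 1 = Module.finrank ℝ (EuclideanSpace ℝ (Fin (N - 1))) := by
    rw [finrank_euclideanSpace_fin, Nat.cast_sub hN, Nat.cast_one]
  obtain ⟨c, hc0, hct, hc⟩ := exists_smul_hausdorffMeasure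
    (volume : Measure (EuclideanSpace ℝ (Fin (N - 1)))) hN1
  have hd : 0 ≤ (N : ℝ) - 1 := by rw [hN1]; positivity
  set d := (N : ℝ) - 1
  have hFB : MeasurableSet (F '' B) :=
    hBm.image_of_continuousOn_injOn hF.continuous.continuousOn
      fun x hx x' hx' h => by rw [← hLF x hx, ← hLF x' hx']; exact congrArg L h
  refine ⟨C₁ + K ^ d * c + c⁻¹, by finiteness, fun f hf => ?_⟩
  have hfL : Measurable fun q => f (L q) := hf.comp hL.continuous.measurable
  set h : EuclideanSpace ℝ (Fin (N - 1)) × ℝ → ℝ≥0∞ := (F '' B).indicator fun q => f (L q)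
    with hh
  have hhm : Measurable h := hfL.indicator hFB
  have hslice : ∀ β, ∫⁻ v, h (v, β) =
      ∫⁻ v in P '' (B ∩ {x | infDist x (frontier Ω) = β}), f (L (v, β)) := by
    intro β
    have hset : P '' (B ∩ {x | infDist x (frontier Ω) = β}) = (fun v => (v, β)) ⁻¹' (F '' B) := by
      ext v
      constructor
      · rintro ⟨x, ⟨hx, rfl⟩, rfl⟩
        exact ⟨x, hx, rfl⟩
      · rintro ⟨x, hx, hxv⟩
        exact ⟨x, ⟨hx, congrArg Prod.snd hxv⟩, congrArg Prod.fst hxv⟩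
    rw [hset, ← lintegral_indicator (measurable_prodMk_right hFB)]
    rfl
  have hsl : ∀ β, ∫⁻ x in B ∩ {x | infDist x (frontier Ω) = β}, f x ∂μH[d] =
      ∫⁻ x in B ∩ {x | infDist x (frontier Ω) = β}, f (L (P x, β)) ∂μH[d] := by
    intro β
    refine setLIntegral_congr_fun (hBm.inter
      (measurableSet_eq_fun (continuous_infDist_pt _).measurable measurable_const)) ?_
    rintro x ⟨hx, rfl⟩
    simp only [hLF x hx]
  have hvol : ∫⁻ x in B, f x = ∫⁻ x in B, f (L (F x)) :=
    setLIntegral_congr_fun hBm fun x hx => by simp only [hFdef, hLF x hx]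
  have hfub : ∫⁻ β, ∫⁻ v, h (v, β) = ∫⁻ q in F '' B, f (L q) ∂(volume.prod volume) := by
    rw [← lintegral_indicator hFB, lintegral_prod_symm _ hhm.aemeasurable]
  have hfL' : ∀ β, Measurable fun v => f (L (v, β)) := fun β =>
    hfL.comp measurable_prodMk_right
  refine ⟨fun β => ∫⁻ v, h (v, β), hhm.lintegral_prod_left', fun β => ?_, fun β => ?_, ?_, ?_⟩
  · have := setLIntegral_image_hausdorff_le (B := B ∩ {x | infDist x (frontier Ω) = β}) hP hd
      (hfL' β)
    rw [hc, Measure.restrict_smul, lintegral_smul_measure, smul_eq_mul, ENNReal.coe_one,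
      ENNReal.one_rpow, one_mul, ← hslice, ← hsl] at this
    calc _ = c⁻¹ * (c * ∫⁻ v, h (v, β)) := by
          rw [← mul_assoc, ENNReal.inv_mul_cancel hc0 hct, one_mul]
      _ ≤ c⁻¹ * _ := by gcongr
      _ ≤ _ := by gcongr; exact le_add_self
  · have hLβ : LipschitzWith K fun v => L (v, β) := by
      simpa [Function.comp_def] using hL.comp (LipschitzWith.prodMk_right β)
    have := setLIntegral_comp_hausdorff_le (B := B ∩ {x | infDist x (frontier Ω) = β})
      hP.continuous.measurable hLβ (by rintro x ⟨hx, rfl⟩; exact hLF x hx) hd (hfL' β)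
    rw [hc, Measure.restrict_smul, lintegral_smul_measure, smul_eq_mul, ← hslice, ← hsl,
      ← mul_assoc] at this
    refine this.trans ?_
    gcongr
    exact le_add_self.trans le_self_add
  · rw [hfub, hvol]
    refine (hcomp _ hfL).1.trans ?_
    gcongr
    exact le_self_add.trans le_self_add
  · rw [hfub, hvol]
    refine (hcomp _ hfL).2.trans ?_
    gcongr
    exact le_self_add.trans le_self_add

theorem exists_lintegral_ball_enorm_rpow_neg_le {E : Type*} [NormedAddCommGroup E]
    [NormedSpace ℝ E] [FiniteDimensional ℝ E] [MeasurableSpace E] [BorelSpace E]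
    (μ : Measure E) [μ.IsAddHaarMeasure] (hd : 1 ≤ Module.finrank ℝ E) {q : ℝ}
    (hq : q < Module.finrank ℝ E) (R : ℝ) :
    ∃ M : ℝ≥0∞, M ≠ ⊤ ∧ ∀ y : E, ∫⁻ x in ball y R, ‖x - y‖ₑ ^ (-q) ∂μ ≤ M := by
  have : Nontrivial E := Module.nontrivial_of_finrank_pos (R := ℝ) hd
  refine ⟨∫⁻ x in ball (0 : E) R, ‖x‖ₑ ^ (-q) ∂μ, ?_, fun y => ?_⟩
  · have hm : Measurable fun x : E => ‖x‖ ^ (-q) := by fun_prop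
    have hint : IntegrableOn (fun x : E => ‖x‖ ^ (-q)) (ball 0 R) μ :=
      integrableOn_ball_of_norm_le_rpow hd (C := 1) hq
        (Filter.Eventually.of_forall fun x => by
          rw [Real.norm_of_nonneg (by positivity), one_mul])
        hm.aestronglyMeasurable
    refine ne_of_eq_of_ne (lintegral_congr_ae ?_) hint.hasFiniteIntegral.ne
    filter_upwards [ae_restrict_of_ae (Measure.ae_ne μ (0 : E))] with x hx
    have hx' : 0 < ‖x‖ := norm_pos_iff.2 hx
    rw [← ofReal_norm (‖x‖ ^ (-q)), Real.norm_of_nonneg (by positivity),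
      ← ENNReal.ofReal_rpow_of_pos hx', ofReal_norm]
  · rw [← lintegral_indicator measurableSet_ball, ← lintegral_indicator measurableSet_ball]
    refine le_of_eq ?_
    rw [← lintegral_sub_right_eq_self (μ := μ) ((ball (0 : E) R).indicator _) y]
    congr 1 with x
    simp only [indicator, mem_ball, dist_eq_norm, sub_zero]

theorem ofReal_rpow_mul_rpow_le {n : ℝ} (hn : 1 ≤ n) {α αs δ t s : ℝ} (hα : 0 < α - 1 / 2)
    (hαs : α - 1 / 2 < αs) (hαs' : αs ≤ α) (hδ : 0 < δ) (hδt : δ ≤ t) (hs : 0 ≤ s) (hst : s ≤ t) :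
    ENNReal.ofReal (δ ^ (2 * αs - 1) * t ^ (1 - n - 2 * α)) ≤
      ENNReal.ofReal δ ^ (αs - α - 1 / 2) * ENNReal.ofReal s ^ (-(n - 1 / 2 - αs + α)) := by
  have hm : 0 < n - 1 / 2 - αs + α := by linarith
  rw [ENNReal.ofReal_rpow_of_pos hδ]
  rcases hs.eq_or_lt with rfl | hs
  · rw [ENNReal.ofReal_zero, ENNReal.zero_rpow_of_neg (by linarith), ENNReal.mul_top]
    · exact le_top
    · rw [← pos_iff_ne_zero, ENNReal.ofReal_pos]; positivity
  rw [ENNReal.ofReal_rpow_of_pos hs, ← ENNReal.ofReal_mul (by positivity)]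
  refine ENNReal.ofReal_le_ofReal ?_
  have ht : 0 < t := hδ.trans_le hδt
  have h1 : t ^ (1 - n - 2 * α) = t ^ (-(α + αs - 1 / 2)) * t ^ (-(n - 1 / 2 - αs + α)) := by
    rw [← Real.rpow_add ht]; ring_nf
  have h2 : δ ^ (αs - α - 1 / 2) = δ ^ (2 * αs - 1) * δ ^ (-(α + αs - 1 / 2)) := by
    rw [← Real.rpow_add hδ]; ring_nf
  have h3 : t ^ (-(α + αs - 1 / 2)) ≤ δ ^ (-(α + αs - 1 / 2)) :=
    Real.rpow_le_rpow_of_nonpos hδ hδt (by linarith)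
  have h4 : t ^ (-(n - 1 / 2 - αs + α)) ≤ s ^ (-(n - 1 / 2 - αs + α)) :=
    Real.rpow_le_rpow_of_nonpos hs hst (by linarith)
  rw [h1, h2, mul_assoc]
  gcongr

theorem exists_local_boundary_integral_le {N : ℕ} (hN : 2 ≤ N)
    {Ω : Set (EuclideanSpace ℝ (Fin N))} (hΩo : IsOpen Ω)
    {p e : EuclideanSpace ℝ (Fin N)} (hp : p ∈ frontier Ω) (he : ‖e‖ = 1) {r : ℝ}
    (hmono : ∀ x ∈ Ω ∩ ball p r, ∀ s, 0 ≤ s → s ≤ 2 * r → x + s • e ∈ Ω ∧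
        infDist x (frontier Ω) + 3 / 4 * s ≤ infDist (x + s • e) (frontier Ω))
    {α αs : ℝ} (hα : 0 < α - 1 / 2) (hαs : α - 1 / 2 < αs) (hαs' : αs ≤ α)
    {D : ℝ} (hD : ∀ x ∈ Ω, ∀ y ∈ Ω, dist x y < D) :
    ∃ M : ℝ≥0∞, M ≠ ⊤ ∧ ∀ y ∈ Ω,
      ∫⁻ x in (Ω ∩ ball p r) ∩ {x | infDist x (frontier Ω) ≤ dist x y},
        ENNReal.ofReal (infDist x (frontier Ω) ^ (2 * αs - 1) *
          dist x y ^ ((2 : ℝ) - N - 2 * α)) ≤ M := by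
  have hN1 : 1 ≤ N := by omega
  obtain ⟨P, hP, K, L, hL, hLF⟩ := exists_straightening hN1 he hmono
  obtain ⟨C₁, hC₁, hcomp⟩ := exists_bilipschitz_comparison volume (volume.prod volume)
    (finrank_straightening hN1) (lipschitzWith_straightening hP) hL hLF
  have hcast : ((N - 1 : ℕ) : ℝ) = N - 1 := by rw [Nat.cast_sub hN1, Nat.cast_one]
  have hn1 : (1 : ℝ) ≤ N - 1 := by
    have : (2 : ℝ) ≤ N := by exact_mod_cast hN
    linarith
  obtain ⟨M₁, hM₁, hI₁⟩ := exists_lintegral_ball_enorm_rpow_neg_le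
    (volume : Measure (EuclideanSpace ℝ (Fin (N - 1)))) (by simp; omega)
    (q := (N : ℝ) - 1 - 1 / 2 - αs + α)
    (by rw [finrank_euclideanSpace_fin, hcast]; linarith) D
  obtain ⟨M₂, hM₂, hI₂⟩ := exists_lintegral_ball_enorm_rpow_neg_le
    (volume : Measure ℝ) (by simp) (q := -(αs - α - 1 / 2)) (by simp; linarith) r
  refine ⟨C₁ * (M₁ * M₂), by finiteness, fun y hy => ?_⟩
  let φ₁ : EuclideanSpace ℝ (Fin (N - 1)) → ℝ≥0∞ :=
    (ball (P y) D).indicator fun v => ‖v - P y‖ₑ ^ (-((N : ℝ) - 1 - 1 / 2 - αs + α))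
  let φ₂ : ℝ → ℝ≥0∞ :=
    (ball (0 : ℝ) r).indicator fun β => ‖β - 0‖ₑ ^ (- -(αs - α - 1 / 2))
  have hφ₁ : Measurable φ₁ := Measurable.indicator (by fun_prop) measurableSet_ball
  have hφ₂ : Measurable φ₂ := Measurable.indicator (by fun_prop) measurableSet_ball
  have hne : (frontier Ω).Nonempty := ⟨p, hp⟩
  have hBm : MeasurableSet (Ω ∩ ball p r) := hΩo.measurableSet.inter measurableSet_ball
  calc _ ≤ ∫⁻ x in (Ω ∩ ball p r) ∩ {x | infDist x (frontier Ω) ≤ dist x y},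
        φ₁ (P x) * φ₂ (infDist x (frontier Ω)) := by
        refine setLIntegral_mono' (hBm.inter (measurableSet_le
          (continuous_infDist_pt _).measurable (by fun_prop))) ?_
        rintro x ⟨⟨hx, hxp⟩, hxy⟩
        have hδ : 0 < infDist x (frontier Ω) := infDist_frontier_pos hΩo hne hx
        have hPxy : ‖P x - P y‖ ≤ dist x y := by
          simpa [dist_eq_norm] using hP.dist_le_mul x y
        have h1 : P x ∈ ball (P y) D := by
          rw [mem_ball, dist_eq_norm]; exact hPxy.trans_lt (hD x hx y hy)
        have h2 : infDist x (frontier Ω) ∈ ball (0 : ℝ) r := by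
          rw [mem_ball, Real.dist_0_eq_abs, abs_of_pos hδ]
          exact (infDist_le_dist_of_mem hp).trans_lt hxp
        have := ofReal_rpow_mul_rpow_le hn1 hα hαs hαs' hδ hxy (norm_nonneg _) hPxy
        simp only [φ₁, φ₂, indicator_of_mem h1, indicator_of_mem h2, sub_zero, neg_neg]
        rw [← ofReal_norm, ← ofReal_norm, Real.norm_of_nonneg hδ.le]
        rwa [mul_comm (ENNReal.ofReal _ ^ _),
          show 1 - ((N : ℝ) - 1) - 2 * α = 2 - N - 2 * α by ring] at this
    _ ≤ ∫⁻ x in Ω ∩ ball p r, φ₁ (P x) * φ₂ (infDist x (frontier Ω)) :=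
        lintegral_mono_set inter_subset_left
    _ ≤ C₁ * ∫⁻ q, φ₁ q.1 * φ₂ q.2 ∂(volume.prod volume) :=
        (hcomp (fun q => φ₁ q.1 * φ₂ q.2) (by fun_prop)).1.trans <| by
          gcongr; exact Measure.restrict_le_self
    _ = C₁ * ((∫⁻ v, φ₁ v) * ∫⁻ β, φ₂ β) := by
        rw [lintegral_prod_mul hφ₁.aemeasurable hφ₂.aemeasurable]
    _ ≤ _ := by
        simp only [φ₁, φ₂, lintegral_indicator measurableSet_ball]
        gcongr
        · exact hI₁ _
        · exact hI₂ _

theorem HasC2Boundary.exists_finite_cover {N : ℕ} {Ω : Set (EuclideanSpace ℝ (Fin N))}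
    (hΩ : HasC2Boundary Ω) (hΩo : IsOpen Ω) (hne : (frontier Ω).Nonempty)
    (hc : IsCompact (frontier Ω)) :
    ∃ (ι : Type) (_ : Fintype ι) (p e : ι → EuclideanSpace ℝ (Fin N)) (r : ι → ℝ) (b : ℝ),
      0 < b ∧ (∀ i, p i ∈ frontier Ω ∧ ‖e i‖ = 1 ∧ 0 < r i ∧
        ∀ x ∈ Ω ∩ ball (p i) (r i), ∀ s, 0 ≤ s → s ≤ 2 * r i → x + s • e i ∈ Ω ∧
          infDist x (frontier Ω) + 3 / 4 * s ≤ infDist (x + s • e i) (frontier Ω)) ∧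
      ∀ x ∈ Ω, infDist x (frontier Ω) < b → ∃ i, x ∈ ball (p i) (r i) := by
  choose! e he r hr hmono using fun p (hp : p ∈ frontier Ω) => hΩ.exists_direction hΩo hp
  obtain ⟨t, ht, hcov⟩ := hc.elim_nhds_subcover (fun p => ball p (r p))
    fun p hp => ball_mem_nhds p (hr p hp)
  obtain ⟨b, hb, hsub⟩ := hc.exists_thickening_subset_open
    (isOpen_biUnion fun p _ => isOpen_ball) hcov
  refine ⟨t, inferInstance, fun i => i, fun i => e i, fun i => r i, b, hb,
    fun i => ⟨ht i i.2, he i (ht i i.2), hr i (ht i i.2), hmono i (ht i i.2)⟩, fun x _ hx => ?_⟩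
  have := hsub ((mem_thickening_iff_infDist_lt hne).2 hx)
  simpa using this

theorem HasC2Boundary.exists_coarea {N : ℕ} (hN : 1 ≤ N)
    {Ω : Set (EuclideanSpace ℝ (Fin N))}
    (hΩ : HasC2Boundary Ω) (hΩo : IsOpen Ω) (hne : (frontier Ω).Nonempty)
    (hc : IsCompact (frontier Ω)) :
    ∃ b₀ : ℝ, 0 < b₀ ∧ ∀ b, 0 < b → b ≤ b₀ → ∃ C : ℝ≥0∞, C ≠ ⊤ ∧
      ∀ f : EuclideanSpace ℝ (Fin N) → ℝ≥0∞, Measurable f → ∀ m : ℝ≥0∞,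
        ((∀ β ∈ Ioo 0 b, ∫⁻ x in {x ∈ Ω | infDist x (frontier Ω) = β}, f x ∂μH[(N : ℝ) - 1] ≤ m) →
          ∫⁻ x in {x ∈ Ω | infDist x (frontier Ω) < b}, f x ≤ C * m) ∧
        ((∀ β ∈ Ioo 0 b, m ≤ ∫⁻ x in {x ∈ Ω | infDist x (frontier Ω) = β}, f x ∂μH[(N : ℝ) - 1]) →
          m ≤ C * ∫⁻ x in {x ∈ Ω | infDist x (frontier Ω) < b}, f x) := by
  obtain ⟨ι, _, p, e, r, b₀, hb₀, hpe, hcov⟩ := hΩ.exists_finite_cover hΩo hne hc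
  choose C hC hco using fun i => exists_local_coarea hN hΩo (hpe i).2.1 (hpe i).2.2.2
  refine ⟨b₀, hb₀, fun b hb hbb => ?_⟩
  have hb0 : ENNReal.ofReal b ≠ 0 := by simpa using hb
  refine ⟨(∑ i, C i * C i) * (ENNReal.ofReal b + (ENNReal.ofReal b)⁻¹),
    ENNReal.mul_ne_top (ENNReal.sum_ne_top.2 fun i _ => ENNReal.mul_ne_top (hC i) (hC i))
      (by simp [hb]), fun f hf m => ?_⟩
  set S : Set (EuclideanSpace ℝ (Fin N)) := {x ∈ Ω | infDist x (frontier Ω) < b} with hS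
  have hSm : MeasurableSet S := hΩo.measurableSet.inter
    (measurableSet_lt (continuous_infDist_pt _).measurable measurable_const)
  have hsl (β : ℝ) : MeasurableSet {x | infDist x (frontier Ω) = β} :=
    measurableSet_eq_fun (continuous_infDist_pt _).measurable measurable_const
  have hind (T : Set (EuclideanSpace ℝ (Fin N))) (μ : Measure (EuclideanSpace ℝ (Fin N))) :
      ∫⁻ x in T, S.indicator f x ∂μ = ∫⁻ x in S ∩ T, f x ∂μ := by
    rw [lintegral_indicator hSm, Measure.restrict_restrict hSm]
  choose g hgm hg1 hg2 hg3 hg4 using fun i => hco i (S.indicator f) (hf.indicator hSm)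
  simp only [hind] at hg1 hg2 hg3 hg4
  constructor
  · intro hm
    have hg (i : ι) : ∫⁻ β, g i β ≤ C i * (m * ENNReal.ofReal b) := by
      calc ∫⁻ β, g i β ≤ ∫⁻ β, (Ioo 0 b).indicator (fun _ => C i * m) β := by
            refine lintegral_mono fun β => (hg1 i β).trans ?_
            by_cases hβ : β ∈ Ioo 0 b
            · rw [indicator_of_mem hβ]
              gcongr
              refine le_trans (lintegral_mono_set ?_) (hm β hβ)
              exact fun x hx => ⟨hx.1.1, hx.2.2⟩
            · have : S ∩ (Ω ∩ ball (p i) (r i) ∩ {x | infDist x (frontier Ω) = β}) = ∅ := by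
                refine eq_empty_of_forall_notMem fun x hx => hβ ?_
                obtain ⟨⟨hxΩ, hxb⟩, -, rfl⟩ := hx
                exact ⟨infDist_frontier_pos hΩo hne hxΩ, hxb⟩
              simp [this]
        _ = _ := by
            rw [lintegral_indicator measurableSet_Ioo, setLIntegral_const, Real.volume_Ioo,
              sub_zero, mul_assoc]
    calc ∫⁻ x in S, f x ≤ ∫⁻ x in ⋃ i, S ∩ (Ω ∩ ball (p i) (r i)), f x := by
          refine lintegral_mono_set fun x hx => ?_
          obtain ⟨i, hi⟩ := hcov x hx.1 (hx.2.trans_le hbb)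
          exact mem_iUnion.2 ⟨i, hx, hx.1, hi⟩
      _ ≤ ∑ i, ∫⁻ x in S ∩ (Ω ∩ ball (p i) (r i)), f x := by
          rw [← tsum_fintype (L := .unconditional _)]; exact lintegral_iUnion_le _ _
      _ ≤ ∑ i, C i * (C i * (m * ENNReal.ofReal b)) :=
          Finset.sum_le_sum fun i _ => (hg3 i).trans (by gcongr; exact hg i)
      _ = (∑ i, C i * C i) * ENNReal.ofReal b * m := by
          rw [mul_assoc, Finset.sum_mul]
          exact Finset.sum_congr rfl fun i _ => by ring
      _ ≤ _ := by gcongr; exact le_self_add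
  · intro hm
    have hmb : m * ENNReal.ofReal b ≤ (∑ i, C i * C i) * ∫⁻ x in S, f x := by
      calc m * ENNReal.ofReal b = ∫⁻ β in Ioo 0 b, m := by
            rw [setLIntegral_const, Real.volume_Ioo, sub_zero]
        _ ≤ ∫⁻ β in Ioo 0 b, ∑ i, C i * g i β := by
            refine setLIntegral_mono' measurableSet_Ioo fun β hβ => (hm β hβ).trans ?_
            calc _ ≤ ∫⁻ x in ⋃ i, S ∩ (Ω ∩ ball (p i) (r i) ∩ {x | infDist x (frontier Ω) = β}),
                  f x ∂μH[(N : ℝ) - 1] := by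
                  refine lintegral_mono_set fun x hx => ?_
                  have hxb : infDist x (frontier Ω) < b := hx.2.trans_lt hβ.2
                  obtain ⟨i, hi⟩ := hcov x hx.1 (hxb.trans_le hbb)
                  exact mem_iUnion.2 ⟨i, ⟨hx.1, hxb⟩, ⟨hx.1, hi⟩, hx.2⟩
              _ ≤ ∑ i, ∫⁻ x in S ∩ (Ω ∩ ball (p i) (r i) ∩ {x | infDist x (frontier Ω) = β}),
                  f x ∂μH[(N : ℝ) - 1] := by
                  rw [← tsum_fintype (L := .unconditional _)]; exact lintegral_iUnion_le _ _
              _ ≤ _ := Finset.sum_le_sum fun i _ => hg2 i β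
        _ ≤ ∫⁻ β, ∑ i, C i * g i β := setLIntegral_le_lintegral _ _
        _ = ∑ i, C i * ∫⁻ β, g i β := by
            rw [lintegral_finsetSum _ fun i _ => (hgm i).const_mul _]
            exact Finset.sum_congr rfl fun i _ => lintegral_const_mul _ (hgm i)
        _ ≤ ∑ i, C i * (C i * ∫⁻ x in S, f x) := by
            refine Finset.sum_le_sum fun i _ => ?_
            gcongr
            refine (hg4 i).trans ?_
            gcongr
            exact inter_subset_left
        _ = _ := by
            rw [Finset.sum_mul]
            exact Finset.sum_congr rfl fun i _ => by ring
    calc m = m * ENNReal.ofReal b * (ENNReal.ofReal b)⁻¹ := by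
          rw [mul_assoc, ENNReal.mul_inv_cancel hb0 ENNReal.ofReal_ne_top, mul_one]
      _ ≤ (∑ i, C i * C i) * (∫⁻ x in S, f x) * (ENNReal.ofReal b)⁻¹ := by gcongr
      _ = (∑ i, C i * C i) * (ENNReal.ofReal b)⁻¹ * ∫⁻ x in S, f x := by ring
      _ ≤ _ := by gcongr; exact le_add_self

theorem HasC2Boundary.exists_boundary_integral_le {N : ℕ} (hN : 2 ≤ N)
    {Ω : Set (EuclideanSpace ℝ (Fin N))}
    (hΩ : HasC2Boundary Ω) (hΩo : IsOpen Ω) (hne : (frontier Ω).Nonempty)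
    (hc : IsCompact (frontier Ω))
    {α αs : ℝ} (hα : 0 < α - 1 / 2) (hαs : α - 1 / 2 < αs) (hαs' : αs ≤ α)
    {D : ℝ} (hD : ∀ x ∈ Ω, ∀ y ∈ Ω, dist x y < D) :
    ∃ b₀ : ℝ, 0 < b₀ ∧ ∃ M : ℝ≥0∞, M ≠ ⊤ ∧ ∀ y ∈ Ω,
      ∫⁻ x in {x ∈ Ω | infDist x (frontier Ω) < b₀ ∧ infDist x (frontier Ω) ≤ dist x y},
        ENNReal.ofReal (infDist x (frontier Ω) ^ (2 * αs - 1) *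
          dist x y ^ ((2 : ℝ) - N - 2 * α)) ≤ M := by
  obtain ⟨ι, _, p, e, r, b₀, hb₀, hpe, hcov⟩ := hΩ.exists_finite_cover hΩo hne hc
  choose M hM hI using fun i => exists_local_boundary_integral_le hN hΩo (hpe i).1 (hpe i).2.1
    (hpe i).2.2.2 hα hαs hαs' hD
  refine ⟨b₀, hb₀, ∑ i, M i, ENNReal.sum_ne_top.2 fun i _ => hM i, fun y hy => ?_⟩
  refine (lintegral_mono_set (t := ⋃ i, (Ω ∩ ball (p i) (r i)) ∩
    {x | infDist x (frontier Ω) ≤ dist x y}) fun x hx => ?_).trans ?_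
  · obtain ⟨i, hi⟩ := hcov x hx.1 hx.2.1
    exact mem_iUnion.2 ⟨i, ⟨hx.1, hi⟩, hx.2.2⟩
  · refine (lintegral_iUnion_le _ _).trans ?_
    rw [tsum_fintype]
    exact Finset.sum_le_sum fun i _ => hI i y hy

theorem isCompact_setOf_le_infDist_frontier {X : Type*} [PseudoMetricSpace X] [ProperSpace X]
    {Ω : Set X} (hΩb : Bornology.IsBounded Ω) {b : ℝ} (hb : 0 < b) :
    IsCompact {x ∈ Ω | b ≤ infDist x (frontier Ω)} := by
  have : {x ∈ Ω | b ≤ infDist x (frontier Ω)} = closure Ω ∩ {x | b ≤ infDist x (frontier Ω)} := by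
    refine Subset.antisymm (inter_subset_inter_left _ subset_closure) ?_
    rintro x ⟨hx, hxb⟩
    refine ⟨by_contra fun hxΩ => ?_, hxb⟩
    have hxf : x ∈ frontier Ω := ⟨hx, fun h => hxΩ (interior_subset h)⟩
    rw [mem_ofPred_eq, infDist_zero_of_mem hxf] at hxb
    exact hb.not_ge hxb
  rw [this]
  exact hΩb.isCompact_closure.inter_right (isClosed_le continuous_const (continuous_infDist_pt _))

theorem HasC2Boundary.exists_martin_integral_bounds {N : ℕ} (hN : 1 ≤ N)
    {Ω : Set (EuclideanSpace ℝ (Fin N))} (hΩ : HasC2Boundary Ω) (hΩo : IsOpen Ω)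
    (hΩb : Bornology.IsBounded Ω) (hne : (frontier Ω).Nonempty) (hc : IsCompact (frontier Ω))
    {w : EuclideanSpace ℝ (Fin N) → ℝ} (hw : ContinuousOn w Ω)
    {K : EuclideanSpace ℝ (Fin N) → EuclideanSpace ℝ (Fin N) → ℝ}
    (hKc : ContinuousOn (Function.uncurry K) (Ω ×ˢ frontier Ω))
    {m₁ m₂ : ℝ≥0∞} (hm₁ : m₁ ≠ 0) (hm₁' : m₁ ≠ ⊤) (hm₂ : m₂ ≠ ⊤) {ε : ℝ} (hε : 0 < ε)
    (hbound : ∀ y ∈ frontier Ω, ∀ β ∈ Ioo 0 ε,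
      m₁ ≤ ∫⁻ x in {x ∈ Ω | infDist x (frontier Ω) = β},
        ENNReal.ofReal (w x * K x y) ∂μH[(N : ℝ) - 1] ∧
      ∫⁻ x in {x ∈ Ω | infDist x (frontier Ω) = β},
        ENNReal.ofReal (w x * K x y) ∂μH[(N : ℝ) - 1] ≤ m₂) :
    ∃ C : ℝ≥0∞, C ≠ ⊤ ∧ ∀ y ∈ frontier Ω,
      1 ≤ C * ∫⁻ x in Ω, ENNReal.ofReal (w x * K x y) ∧
      ∫⁻ x in Ω, ENNReal.ofReal (w x * K x y) ≤ C := by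
  obtain ⟨b₀, hb₀, hco⟩ := hΩ.exists_coarea hN hΩo hne hc
  obtain ⟨b, hb, hbb, hbε⟩ : ∃ b, 0 < b ∧ b ≤ b₀ ∧ b ≤ ε :=
    ⟨min b₀ ε, lt_min hb₀ hε, min_le_left _ _, min_le_right _ _⟩
  obtain ⟨C, hC, hco⟩ := hco b hb hbb
  have hQ := isCompact_setOf_le_infDist_frontier hΩb hb
  have hcont : ContinuousOn (fun q : EuclideanSpace ℝ (Fin N) × EuclideanSpace ℝ (Fin N) =>
      w q.1 * K q.1 q.2) (Ω ×ˢ frontier Ω) :=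
    (hw.comp continuousOn_fst fun q hq => hq.1).mul hKc
  obtain ⟨M, hM⟩ := (hQ.prod hc).exists_bound_of_continuousOn
    (hcont.mono (prod_mono_left (sep_subset _ _)))
  refine ⟨m₁⁻¹ * C + (C * m₂ + ENNReal.ofReal M * volume Ω),
    by have := hΩb.measure_lt_top (μ := volume); finiteness, fun y hy => ?_⟩
  have hfm : Measurable (Ω.indicator fun x => ENNReal.ofReal (w x * K x y)) := by
    classical
    rw [← piecewise_eq_indicator]
    refine ContinuousOn.measurable_piecewise ?_ continuousOn_const hΩo.measurableSet
    refine ENNReal.continuous_ofReal.comp_continuousOn (hcont.comp (f := fun x => (x, y)) ?_ ?_)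
    · fun_prop
    · exact fun x hx => ⟨hx, hy⟩
  have hind {S : Set (EuclideanSpace ℝ (Fin N))} (hS : MeasurableSet S) (hSΩ : S ⊆ Ω)
      (μ : Measure (EuclideanSpace ℝ (Fin N))) :
      ∫⁻ x in S, Ω.indicator (fun x => ENNReal.ofReal (w x * K x y)) x ∂μ =
        ∫⁻ x in S, ENNReal.ofReal (w x * K x y) ∂μ :=
    setLIntegral_congr_fun hS fun x hx => indicator_of_mem (hSΩ hx) _
  have hSm : MeasurableSet {x ∈ Ω | infDist x (frontier Ω) < b} := hΩo.measurableSet.inter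
    (measurableSet_lt (continuous_infDist_pt _).measurable measurable_const)
  have hsl (β : ℝ) : MeasurableSet {x ∈ Ω | infDist x (frontier Ω) = β} :=
    hΩo.measurableSet.inter
      (measurableSet_eq_fun (continuous_infDist_pt _).measurable measurable_const)
  obtain ⟨hup, -⟩ := hco _ hfm m₂
  obtain ⟨-, hlow⟩ := hco _ hfm m₁
  simp only [hind hSm (sep_subset _ _), hind (hsl _) (sep_subset _ _)] at hup hlow
  have hsub (β : ℝ) (hβ : β ∈ Ioo 0 b) := hbound y hy β ⟨hβ.1, hβ.2.trans_le hbε⟩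
  constructor
  · calc 1 = m₁⁻¹ * m₁ := (ENNReal.inv_mul_cancel hm₁ hm₁').symm
      _ ≤ m₁⁻¹ * (C * ∫⁻ x in Ω, ENNReal.ofReal (w x * K x y)) := by
          gcongr
          refine (hlow fun β hβ => (hsub β hβ).1).trans ?_
          gcongr
          exact sep_subset _ _
      _ ≤ _ := by rw [← mul_assoc]; gcongr; exact le_self_add
  · calc _ ≤ ∫⁻ x in {x ∈ Ω | infDist x (frontier Ω) < b} ∪
          {x ∈ Ω | b ≤ infDist x (frontier Ω)}, ENNReal.ofReal (w x * K x y) := by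
          refine lintegral_mono_set fun x hx => ?_
          rcases lt_or_ge (infDist x (frontier Ω)) b with h | h
          exacts [Or.inl ⟨hx, h⟩, Or.inr ⟨hx, h⟩]
      _ ≤ C * m₂ + ENNReal.ofReal M * volume Ω := by
          refine (lintegral_union_le _ _ _).trans (add_le_add
            (hup fun β hβ => (hsub β hβ).2) ?_)
          calc _ ≤ ∫⁻ x in {x ∈ Ω | b ≤ infDist x (frontier Ω)}, ENNReal.ofReal M :=
                setLIntegral_mono' hQ.measurableSet fun x hx =>
                  ENNReal.ofReal_le_ofReal ((le_abs_self _).trans (hM (x, y) ⟨hx, hy⟩))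
            _ ≤ _ := by rw [setLIntegral_const]; gcongr; exact sep_subset _ _
      _ ≤ _ := le_add_self

theorem ofReal_le_ofReal_mul_enorm_rpow {E : Type*} [NormedAddCommGroup E] {x y : E} {t c q : ℝ}
    (hc : 0 < c) (hq : 0 < q) (h : 0 < dist x y → t ≤ c * dist x y ^ (-q)) :
    ENNReal.ofReal t ≤ ENNReal.ofReal c * ‖x - y‖ₑ ^ (-q) := by
  rcases eq_or_ne x y with rfl | hxy
  · rw [sub_self, enorm_zero, ENNReal.zero_rpow_of_neg (by linarith),
      ENNReal.mul_top (by simpa using hc)]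
    exact le_top
  · have hd : 0 < dist x y := dist_pos.2 hxy
    rw [← ofReal_norm, ← dist_eq_norm, ENNReal.ofReal_rpow_of_pos hd, ← ENNReal.ofReal_mul hc.le]
    exact ENNReal.ofReal_le_ofReal (h hd)

theorem HasC2Boundary.exists_green_integral_le {N : ℕ} (hN : 3 ≤ N)
    {Ω : Set (EuclideanSpace ℝ (Fin N))} (hΩ2 : HasC2Boundary Ω) (hΩo : IsOpen Ω)
    (hΩb : Bornology.IsBounded Ω) (hne : (frontier Ω).Nonempty) (hc : IsCompact (frontier Ω))
    {α αs : ℝ} (hα : 0 < α - 1/2) (hαs : α - 1/2 < αs) (hαs' : αs ≤ α)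
    {Φ : EuclideanSpace ℝ (Fin N) → ℝ}
    {G : EuclideanSpace ℝ (Fin N) → EuclideanSpace ℝ (Fin N) → ℝ}
    {a c₀ β₁ : ℝ} (ha : 2 ≤ a) (hc₀ : 1 ≤ c₀) (hβ₁ : 0 < β₁)
    (hG1 : ∀ β ∈ Ioo (0 : ℝ) β₁, ∀ x ∈ Ω, infDist x (frontier Ω) = β →
      ∀ y ∈ Ω, 0 < dist x y → dist x y < a * β →
        Φ x * G x y ≤ c₀ * dist x y ^ ((2 : ℝ) - N) * Φ y)
    (hG2 : ∀ β ∈ Ioo (0 : ℝ) β₁, ∀ x ∈ Ω, infDist x (frontier Ω) = β →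
      ∀ y ∈ Ω, a * β ≤ dist x y →
        Φ x * G x y ≤ c₀ * β ^ (2 * αs) * dist x y ^ ((2 : ℝ) - N - 2 * α) * Φ y)
    (hG3 : ∀ b : ℝ, 0 < b → ∃ Cb : ℝ, 1 ≤ Cb ∧ ∀ x ∈ Ω, ∀ y ∈ Ω, 0 < dist x y →
      dist x y ≤ b⁻¹ * min (infDist x (frontier Ω)) (infDist y (frontier Ω)) →
      G x y ≤ Cb * dist x y ^ ((2 : ℝ) - N))
    (hGsym : ∀ x ∈ Ω, ∀ y ∈ Ω, G x y = G y x)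
    (hG4 : ∀ r : ℝ, 0 < r → ∃ Cr : ℝ, 0 < Cr ∧ ∀ x ∈ Ω, ∀ y ∈ Ω,
      r ≤ infDist y (frontier Ω) → infDist x (frontier Ω) < r / 2 → G x y ≤ Cr * Φ x)
    (hΦc : ContinuousOn Φ Ω) (hΦpos : ∀ x ∈ Ω, 0 < Φ x) :
    ∃ C : ℝ≥0∞, C ≠ ⊤ ∧ ∀ y ∈ Ω,
      ∫⁻ x in Ω, ENNReal.ofReal (Φ x / infDist x (frontier Ω) * G x y) ≤
        C * ENNReal.ofReal (Φ y) := by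
  have hN3 : (3 : ℝ) ≤ N := by exact_mod_cast hN
  have hfin : Module.finrank ℝ (EuclideanSpace ℝ (Fin N)) = N := finrank_euclideanSpace_fin
  obtain ⟨D, hD⟩ : ∃ D, ∀ x ∈ Ω, ∀ y ∈ Ω, dist x y < D := by
    obtain ⟨D, hD⟩ := isBounded_iff.1 hΩb
    exact ⟨D + 1, fun x hx y hy => (hD hx hy).trans_lt (lt_add_one D)⟩
  obtain ⟨b₀, hb₀, M₁, hM₁, hI₁⟩ :=
    hΩ2.exists_boundary_integral_le (by omega) hΩo hne hc hα hαs hαs' hD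
  obtain ⟨M₂, hM₂, hI₂⟩ := exists_lintegral_ball_enorm_rpow_neg_le
    (volume : Measure (EuclideanSpace ℝ (Fin N))) (by omega) (q := (N : ℝ) - 1)
    (by rw [hfin]; linarith) D
  obtain ⟨M₃, hM₃, hI₃⟩ := exists_lintegral_ball_enorm_rpow_neg_le
    (volume : Measure (EuclideanSpace ℝ (Fin N))) (by omega) (q := (N : ℝ) - 2)
    (by rw [hfin]; linarith) D
  obtain ⟨b, hb, hbb, hbβ⟩ : ∃ b, 0 < b ∧ b ≤ b₀ ∧ b ≤ β₁ :=
    ⟨min b₀ β₁, lt_min hb₀ hβ₁, min_le_left _ _, min_le_right _ _⟩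
  have hδpos (x) (hx : x ∈ Ω) := infDist_frontier_pos hΩo hne hx
  have hQ := isCompact_setOf_le_infDist_frontier hΩb hb
  have hQ' := isCompact_setOf_le_infDist_frontier hΩb (half_pos hb)
  -- bounds on the core of the domain
  obtain ⟨A, hA0, hA⟩ : ∃ A : ℝ, 0 < A ∧ ∀ x ∈ Ω, b ≤ infDist x (frontier Ω) →
      Φ x / infDist x (frontier Ω) ≤ A := by
    obtain ⟨A, hA⟩ := hQ.exists_bound_of_continuousOn (hΦc.mono (sep_subset _ _))
    refine ⟨(|A| + 1) / b, by positivity, fun x hx hxb => ?_⟩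
    have : Φ x ≤ |A| + 1 := by
      linarith [le_abs_self A, le_abs_self (Φ x), hA x ⟨hx, hxb⟩, Real.norm_eq_abs (Φ x)]
    gcongr
  obtain ⟨B, hB0, hB⟩ : ∃ B : ℝ, 0 < B ∧ ∀ y ∈ Ω, b / 2 ≤ infDist y (frontier Ω) →
      1 ≤ B * Φ y := by
    obtain ⟨B, hB⟩ := hQ'.exists_bound_of_continuousOn (f := fun y => (Φ y)⁻¹)
      ((hΦc.mono (sep_subset _ _)).inv₀ fun y hy => (hΦpos y hy.1).ne')
    refine ⟨|B| + 1, by positivity, fun y hy hyb => ?_⟩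
    have h1 := hB y ⟨hy, hyb⟩
    have h2 := hΦpos y hy
    rw [Real.norm_of_nonneg (by positivity), inv_le_iff_one_le_mul₀ h2] at h1
    nlinarith [le_abs_self B]
  obtain ⟨Cr, hCr0, hCr⟩ := hG4 b hb
  obtain ⟨Cb, hCb1, hCb⟩ := hG3 (b / 2 / (|D| + 1)) (by positivity)
  have hcore (x) (hx : x ∈ Ω) (hxb : b ≤ infDist x (frontier Ω)) (y) (hy : y ∈ Ω) :
      ENNReal.ofReal (Φ x / infDist x (frontier Ω) * G x y) ≤
        ENNReal.ofReal (A * Cr * Φ y) +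
          ENNReal.ofReal (A * Cb * B * Φ y) * ‖x - y‖ₑ ^ (-((N : ℝ) - 2)) := by
    have hΦy := hΦpos y hy
    have hw : 0 ≤ Φ x / infDist x (frontier Ω) :=
      div_nonneg (hΦpos x hx).le infDist_nonneg
    rcases lt_or_ge (infDist y (frontier Ω)) (b / 2) with hyb | hyb
    · refine le_trans (ENNReal.ofReal_le_ofReal ?_) le_self_add
      rw [hGsym x hx y hy, mul_assoc]
      calc _ ≤ Φ x / infDist x (frontier Ω) * (Cr * Φ y) := by
            gcongr; exact hCr y hy x hx hxb hyb
        _ ≤ _ := by gcongr; exact hA x hx hxb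
    · refine le_trans (ofReal_le_ofReal_mul_enorm_rpow (by positivity) (by linarith)
        fun hd => ?_) le_add_self
      have h1 : G x y ≤ Cb * dist x y ^ ((2 : ℝ) - N) := by
        refine hCb x hx y hy hd ?_
        have h2 : b / 2 ≤ min (infDist x (frontier Ω)) (infDist y (frontier Ω)) :=
          le_min (by linarith) hyb
        calc dist x y ≤ |D| + 1 := by linarith [hD x hx y hy, le_abs_self D]
          _ = (b / 2 / (|D| + 1))⁻¹ * (b / 2) := by field_simp
          _ ≤ _ := by gcongr
      have h3 : (0 : ℝ) ≤ dist x y ^ ((2 : ℝ) - N) := by positivity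
      rw [neg_sub]
      calc _ ≤ Φ x / infDist x (frontier Ω) * (Cb * dist x y ^ ((2 : ℝ) - N)) := by gcongr
        _ ≤ A * (Cb * dist x y ^ ((2 : ℝ) - N)) := by gcongr; exact hA x hx hxb
        _ ≤ A * (Cb * dist x y ^ ((2 : ℝ) - N)) * (B * Φ y) :=
            le_mul_of_one_le_right (by positivity) (hB y hy hyb)
        _ = _ := by ring
  have hnear (x) (hx : x ∈ Ω) (hxb : infDist x (frontier Ω) < b) (y) (hy : y ∈ Ω)
      (hxy : dist x y < a * infDist x (frontier Ω)) :
      ENNReal.ofReal (Φ x / infDist x (frontier Ω) * G x y) ≤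
        ENNReal.ofReal (c₀ * a * Φ y) * ‖x - y‖ₑ ^ (-((N : ℝ) - 1)) := by
    have hΦy := hΦpos y hy
    have hδ := hδpos x hx
    refine ofReal_le_ofReal_mul_enorm_rpow (by positivity) (by linarith) fun hd => ?_
    have h1 := hG1 _ ⟨hδ, hxb.trans_le hbβ⟩ x hx rfl y hy hd hxy
    have h2 : dist x y ^ ((2 : ℝ) - N) = dist x y ^ (-((N : ℝ) - 1)) * dist x y := by
      rw [← Real.rpow_add_one hd.ne']; ring_nf
    rw [div_mul_eq_mul_div, div_le_iff₀ hδ]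
    refine h1.trans ?_
    rw [h2]
    have h3 : 0 < dist x y ^ (-((N : ℝ) - 1)) := by positivity
    calc _ = c₀ * dist x y ^ (-((N : ℝ) - 1)) * Φ y * dist x y := by ring
      _ ≤ c₀ * dist x y ^ (-((N : ℝ) - 1)) * Φ y * (a * infDist x (frontier Ω)) := by gcongr
      _ = _ := by ring
  have hfar (x) (hx : x ∈ Ω) (hxb : infDist x (frontier Ω) < b) (y) (hy : y ∈ Ω)
      (hxy : a * infDist x (frontier Ω) ≤ dist x y) :
      ENNReal.ofReal (Φ x / infDist x (frontier Ω) * G x y) ≤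
        ENNReal.ofReal (c₀ * Φ y) * ENNReal.ofReal (infDist x (frontier Ω) ^ (2 * αs - 1) *
          dist x y ^ ((2 : ℝ) - N - 2 * α)) := by
    have hΦy := hΦpos y hy
    have hδ := hδpos x hx
    rw [← ENNReal.ofReal_mul (by positivity)]
    refine ENNReal.ofReal_le_ofReal ?_
    rw [div_mul_eq_mul_div, div_le_iff₀ hδ]
    refine (hG2 _ ⟨hδ, hxb.trans_le hbβ⟩ x hx rfl y hy hxy).trans (le_of_eq ?_)
    rw [show 2 * αs = 2 * αs - 1 + 1 by ring, Real.rpow_add_one hδ.ne',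
      show 2 * αs - 1 + 1 - 1 = 2 * αs - 1 by ring]
    ring
  refine ⟨ENNReal.ofReal (c₀ * a) * M₂ + ENNReal.ofReal c₀ * M₁ +
    (ENNReal.ofReal (A * Cr) * volume Ω + ENNReal.ofReal (A * Cb * B) * M₃),
    by have := hΩb.measure_lt_top (μ := volume); finiteness, fun y hy => ?_⟩
  have hδm : Measurable fun x => infDist x (frontier Ω) := (continuous_infDist_pt _).measurable
  have hSm : MeasurableSet {x ∈ Ω | infDist x (frontier Ω) < b ∧
      dist x y < a * infDist x (frontier Ω)} :=
    hΩo.measurableSet.inter ((measurableSet_lt hδm measurable_const).inter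
      (measurableSet_lt (by fun_prop) (hδm.const_mul a)))
  have hTm : MeasurableSet {x ∈ Ω | infDist x (frontier Ω) < b ∧
      a * infDist x (frontier Ω) ≤ dist x y} :=
    hΩo.measurableSet.inter ((measurableSet_lt hδm measurable_const).inter
      (measurableSet_le (hδm.const_mul a) (by fun_prop)))
  have hΩball : Ω ⊆ ball y D := fun x hx => hD x hx y hy
  have hΦy := (hΦpos y hy).le
  calc _ ≤ ∫⁻ x in ({x ∈ Ω | infDist x (frontier Ω) < b ∧ dist x y < a * infDist x (frontier Ω)} ∪
          {x ∈ Ω | infDist x (frontier Ω) < b ∧ a * infDist x (frontier Ω) ≤ dist x y}) ∪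
          {x ∈ Ω | b ≤ infDist x (frontier Ω)},
          ENNReal.ofReal (Φ x / infDist x (frontier Ω) * G x y) := by
        refine lintegral_mono_set fun x hx => ?_
        rcases lt_or_ge (infDist x (frontier Ω)) b with h | h
        · rcases lt_or_ge (dist x y) (a * infDist x (frontier Ω)) with h' | h'
          exacts [Or.inl (Or.inl ⟨hx, h, h'⟩), Or.inl (Or.inr ⟨hx, h, h'⟩)]
        · exact Or.inr ⟨hx, h⟩
    _ ≤ (ENNReal.ofReal (c₀ * a * Φ y) * M₂ + ENNReal.ofReal (c₀ * Φ y) * M₁) +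
          (ENNReal.ofReal (A * Cr * Φ y) * volume Ω + ENNReal.ofReal (A * Cb * B * Φ y) * M₃) := by
        refine (lintegral_union_le _ _ _).trans (add_le_add
          ((lintegral_union_le _ _ _).trans (add_le_add ?_ ?_)) ?_)
        · refine (setLIntegral_mono' hSm
            fun x hx => hnear x hx.1 hx.2.1 y hy hx.2.2).trans ?_
          rw [lintegral_const_mul' _ _ ENNReal.ofReal_ne_top]
          gcongr
          exact (lintegral_mono_set fun x hx => hΩball hx.1).trans (hI₂ y)
        · refine (setLIntegral_mono' hTm
            fun x hx => hfar x hx.1 hx.2.1 y hy hx.2.2).trans ?_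
          rw [lintegral_const_mul' _ _ ENNReal.ofReal_ne_top]
          gcongr
          refine le_trans (lintegral_mono_set ?_) (hI₁ y hy)
          refine fun x hx => ⟨hx.1, hx.2.1.trans_le hbb, le_trans ?_ hx.2.2⟩
          nlinarith [hδpos x hx.1]
        · refine (setLIntegral_mono' hQ.measurableSet
            fun x hx => hcore x hx.1 hx.2 y hy).trans ?_
          rw [lintegral_add_left measurable_const, setLIntegral_const,
            lintegral_const_mul' _ _ ENNReal.ofReal_ne_top]
          gcongr
          · exact sep_subset _ _
          · exact (lintegral_mono_set fun x hx => hΩball hx.1).trans (hI₃ y)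
    _ = _ := by
        rw [ENNReal.ofReal_mul' hΦy, ENNReal.ofReal_mul' hΦy, ENNReal.ofReal_mul' hΦy,
          ENNReal.ofReal_mul' hΦy]
        ring

theorem HasC2Boundary.exists_le_green_integral {N : ℕ} (hN : 3 ≤ N)
    {Ω : Set (EuclideanSpace ℝ (Fin N))} (hΩ2 : HasC2Boundary Ω) (hΩo : IsOpen Ω)
    (hΩb : Bornology.IsBounded Ω) (hne : (frontier Ω).Nonempty) (hc : IsCompact (frontier Ω))
    {Φ : EuclideanSpace ℝ (Fin N) → ℝ}
    {G : EuclideanSpace ℝ (Fin N) → EuclideanSpace ℝ (Fin N) → ℝ}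
    (hGpos : ∀ x ∈ Ω, ∀ y ∈ Ω, x ≠ y → 0 < G x y)
    {a c₀ β₁ : ℝ} (ha : 2 ≤ a) (hc₀ : 1 ≤ c₀) (hβ₁ : 0 < β₁)
    (hG1 : ∀ β ∈ Ioo (0 : ℝ) β₁, ∀ x ∈ Ω, infDist x (frontier Ω) = β →
      ∀ y ∈ Ω, 0 < dist x y → dist x y < a * β →
        c₀⁻¹ * dist x y ^ ((2 : ℝ) - N) * Φ y ≤ Φ x * G x y)
    (hG3 : ∀ b : ℝ, 0 < b → ∃ Cb : ℝ, 1 ≤ Cb ∧ ∀ x ∈ Ω, ∀ y ∈ Ω, 0 < dist x y →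
      dist x y ≤ b⁻¹ * min (infDist x (frontier Ω)) (infDist y (frontier Ω)) →
      Cb⁻¹ * dist x y ^ ((2 : ℝ) - N) ≤ G x y)
    (hΦc : ContinuousOn Φ Ω) (hΦpos : ∀ x ∈ Ω, 0 < Φ x) :
    ∃ C : ℝ≥0∞, C ≠ ⊤ ∧ ∀ y ∈ Ω, ENNReal.ofReal (Φ y) ≤
      C * ∫⁻ x in Ω, ENNReal.ofReal (Φ x / infDist x (frontier Ω) * G x y) := by
  have hN3 : (3 : ℝ) ≤ N := by exact_mod_cast hN
  have hfin : Module.finrank ℝ (EuclideanSpace ℝ (Fin N)) = N := finrank_euclideanSpace_fin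
  have : Nontrivial (EuclideanSpace ℝ (Fin N)) :=
    Module.nontrivial_of_finrank_pos (R := ℝ) (by omega)
  obtain ⟨ι, _, p, e, r, b₀, hb₀, hpe, hcov⟩ := hΩ2.exists_finite_cover hΩo hne hc
  obtain ⟨b, hb, hbb, hbβ⟩ : ∃ b, 0 < b ∧ b ≤ b₀ ∧ b ≤ β₁ / 2 :=
    ⟨min b₀ (β₁ / 2), lt_min hb₀ (by linarith), min_le_left _ _, min_le_right _ _⟩
  obtain ⟨s, hs, hsr, hsb⟩ : ∃ s, 0 < s ∧ (∀ i, s ≤ r i) ∧ s ≤ b / 4 := by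
    rcases isEmpty_or_nonempty ι with h | h
    · exact ⟨b / 4, by linarith, fun i => h.elim i, le_rfl⟩
    · obtain ⟨i, hi⟩ := Finite.exists_min r
      exact ⟨min (r i) (b / 4), lt_min (hpe i).2.2.1 (by linarith),
        fun j => (min_le_left _ _).trans (hi j), min_le_right _ _⟩
  have hδpos (x) (hx : x ∈ Ω) := infDist_frontier_pos hΩo hne hx
  have hQ := isCompact_setOf_le_infDist_frontier hΩb hb
  have hQ' := isCompact_setOf_le_infDist_frontier hΩb (half_pos hb)
  obtain ⟨A, hA0, hA⟩ : ∃ A : ℝ, 0 < A ∧ ∀ y ∈ Ω, b ≤ infDist y (frontier Ω) → Φ y ≤ A := by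
    obtain ⟨A, hA⟩ := hQ.exists_bound_of_continuousOn (hΦc.mono (sep_subset _ _))
    refine ⟨|A| + 1, by positivity, fun x hx hxb => ?_⟩
    linarith [le_abs_self A, le_abs_self (Φ x), hA x ⟨hx, hxb⟩, Real.norm_eq_abs (Φ x)]
  obtain ⟨B, hB0, hB⟩ : ∃ B : ℝ, 0 < B ∧ ∀ x ∈ Ω, b / 2 ≤ infDist x (frontier Ω) →
      1 ≤ B * (Φ x / infDist x (frontier Ω)) := by
    obtain ⟨B, hB⟩ := hQ'.exists_bound_of_continuousOn (f := fun y => infDist y (frontier Ω) / Φ y)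
      ((continuous_infDist_pt _).continuousOn.div (hΦc.mono (sep_subset _ _))
        fun y hy => (hΦpos y hy.1).ne')
    refine ⟨|B| + 1, by positivity, fun x hx hxb => ?_⟩
    have h1 := hB x ⟨hx, hxb⟩
    have h2 := hΦpos x hx
    have h3 := hδpos x hx
    rw [Real.norm_of_nonneg (by positivity), div_le_iff₀ h2] at h1
    rw [← mul_div_assoc, le_div_iff₀ h3]
    nlinarith [le_abs_self B]
  obtain ⟨Cb, hCb1, hCb⟩ := hG3 1 one_pos
  set ρ : ℝ := (9 / 8 * s) ^ ((2 : ℝ) - N) with hρ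
  have hρ0 : 0 < ρ := by positivity
  have hdist {z y x : EuclideanSpace ℝ (Fin N)} (hz : dist z y = s) (hx : x ∈ ball z (s / 8)) :
      0 < dist x y ∧ dist x y < 9 / 8 * s ∧ ρ ≤ dist x y ^ ((2 : ℝ) - N) := by
    rw [mem_ball] at hx
    have h1 := dist_triangle x z y
    have h2 := dist_triangle_left z y x
    have h3 : 0 < dist x y := by linarith
    have h4 : dist x y < 9 / 8 * s := by linarith
    exact ⟨h3, h4, Real.rpow_le_rpow_of_nonpos h3 h4.le (by linarith)⟩
  -- every point has a ball of fixed radius nearby on which the kernel is bounded below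
  have key (y) (hy : y ∈ Ω) : ∃ z, ball z (s / 8) ⊆ Ω ∧ ∀ x ∈ ball z (s / 8),
      Φ y ≤ (c₀ * β₁ * ρ⁻¹ + A * B * Cb * ρ⁻¹) * (Φ x / infDist x (frontier Ω) * G x y) := by
    have hΦy := hΦpos y hy
    have hδx (x) : infDist x (frontier Ω) ≤ infDist y (frontier Ω) + dist x y :=
      infDist_le_infDist_add_dist
    have hδx' (x) : infDist y (frontier Ω) ≤ infDist x (frontier Ω) + dist x y := by
      rw [dist_comm]; exact infDist_le_infDist_add_dist
    rcases lt_or_ge (infDist y (frontier Ω)) b with hyb | hyb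
    · obtain ⟨i, hi⟩ := hcov y hy (hyb.trans_le hbb)
      obtain ⟨-, hei, hri, hmono⟩ := hpe i
      obtain ⟨hz, hzδ⟩ := hmono y ⟨hy, hi⟩ s hs.le (by linarith [hsr i])
      have hzy : dist (y + s • e i) y = s := by
        rw [dist_eq_norm, add_sub_cancel_left, norm_smul, hei, Real.norm_of_nonneg hs.le, mul_one]
      have hyδ := hδpos y hy
      have hsub : ball (y + s • e i) (s / 8) ⊆ Ω :=
        (ball_subset_ball (by linarith)).trans (ball_infDist_frontier_subset hz)
      refine ⟨_, hsub, fun x hx => ?_⟩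
      obtain ⟨h1, h2, h3⟩ := hdist hzy hx
      have hxΩ := hsub hx
      have hzx : infDist (y + s • e i) (frontier Ω) ≤
          infDist x (frontier Ω) + dist (y + s • e i) x := infDist_le_infDist_add_dist
      rw [mem_ball, dist_comm] at hx
      have hxδ : 5 / 8 * s ≤ infDist x (frontier Ω) := by linarith
      have hδ := hδpos x hxΩ
      have hxβ : infDist x (frontier Ω) < β₁ := by linarith [hδx x]
      have h4 := hG1 _ ⟨hδ, hxβ⟩ x hxΩ rfl y hy h1 (by nlinarith)
      have hGx := hGpos x hxΩ y hy (dist_pos.1 h1)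
      have hΦx := hΦpos x hxΩ
      calc Φ y = c₀ * ρ⁻¹ * (c₀⁻¹ * ρ * Φ y) := by field_simp
        _ ≤ c₀ * ρ⁻¹ * (c₀⁻¹ * dist x y ^ ((2 : ℝ) - N) * Φ y) := by gcongr
        _ ≤ c₀ * ρ⁻¹ * (Φ x * G x y) := by gcongr
        _ = c₀ * ρ⁻¹ * (Φ x / infDist x (frontier Ω) * G x y) * infDist x (frontier Ω) := by
            field_simp
        _ ≤ c₀ * ρ⁻¹ * (Φ x / infDist x (frontier Ω) * G x y) * β₁ := by gcongr
        _ = c₀ * β₁ * ρ⁻¹ * (Φ x / infDist x (frontier Ω) * G x y) := by ring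
        _ ≤ _ := by gcongr; exact le_add_of_nonneg_right (by positivity)
    · obtain ⟨v, hv⟩ := exists_norm_eq (EuclideanSpace ℝ (Fin N)) hs.le
      have hzy : dist (y + v) y = s := by rw [dist_eq_norm, add_sub_cancel_left, hv]
      have hsub : ball (y + v) (s / 8) ⊆ Ω := fun x hx =>
        ball_infDist_frontier_subset hy (by
          rw [mem_ball]; linarith [(hdist hzy hx).2.1])
      refine ⟨_, hsub, fun x hx => ?_⟩
      obtain ⟨h1, h2, h3⟩ := hdist hzy hx
      have hxΩ := hsub hx
      have hxb : b / 2 ≤ infDist x (frontier Ω) := by linarith [hδx' x]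
      have h4 := hCb x hxΩ y hy h1 (by
        rw [inv_one, one_mul]; exact le_min (by linarith) (by linarith))
      have hGx := hGpos x hxΩ y hy (dist_pos.1 h1)
      have hΦx := hΦpos x hxΩ
      have hδ := hδpos x hxΩ
      calc Φ y ≤ A := hA y hy hyb
        _ ≤ A * (B * (Φ x / infDist x (frontier Ω))) :=
            le_mul_of_one_le_right hA0.le (hB x hxΩ hxb)
        _ = A * (B * (Φ x / infDist x (frontier Ω))) * (Cb * ρ⁻¹ * (Cb⁻¹ * ρ)) := by
            field_simp
        _ ≤ A * (B * (Φ x / infDist x (frontier Ω))) * (Cb * ρ⁻¹ * G x y) := by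
            gcongr
            refine le_trans ?_ h4
            gcongr
        _ = A * B * Cb * ρ⁻¹ * (Φ x / infDist x (frontier Ω) * G x y) := by ring
        _ ≤ _ := by gcongr; exact le_add_of_nonneg_left (by positivity)
  set k : ℝ := c₀ * β₁ * ρ⁻¹ + A * B * Cb * ρ⁻¹
  have hk : 0 ≤ k := by positivity
  set V : ℝ≥0∞ := volume (ball (0 : EuclideanSpace ℝ (Fin N)) (s / 8)) with hV
  have hV0 : V ≠ 0 := (measure_ball_pos _ _ (by linarith)).ne'
  have hVt : V ≠ ⊤ := measure_ball_lt_top.ne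
  refine ⟨V⁻¹ * ENNReal.ofReal k, by finiteness, fun y hy => ?_⟩
  obtain ⟨z, hzΩ, hz⟩ := key y hy
  calc ENNReal.ofReal (Φ y) = V⁻¹ * (ENNReal.ofReal (Φ y) * V) := by
        rw [mul_comm _ V, ← mul_assoc, ENNReal.inv_mul_cancel hV0 hVt, one_mul]
    _ = V⁻¹ * ∫⁻ x in ball z (s / 8), ENNReal.ofReal (Φ y) := by
        rw [setLIntegral_const, hV, Measure.addHaar_ball_center volume z]
    _ ≤ V⁻¹ * ∫⁻ x in ball z (s / 8),
          ENNReal.ofReal k * ENNReal.ofReal (Φ x / infDist x (frontier Ω) * G x y) := by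
        gcongr 1
        refine setLIntegral_mono' measurableSet_ball fun x hx => ?_
        rw [← ENNReal.ofReal_mul hk]
        exact ENNReal.ofReal_le_ofReal (hz x hx)
    _ ≤ _ := by
        rw [lintegral_const_mul' _ _ ENNReal.ofReal_ne_top, ← mul_assoc]
        gcongr

theorem sFinite_of_lintegral_ne_top {X : Type*} [MeasurableSpace X] {μ : Measure X}
    {f : X → ℝ≥0∞} (hf : AEMeasurable f μ) (hf0 : ∀ᵐ x ∂μ, f x ≠ 0) (hft : ∀ᵐ x ∂μ, f x ≠ ⊤)
    (h : ∫⁻ x, f x ∂μ ≠ ⊤) : SFinite μ := by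
  have := isFiniteMeasure_withDensity h
  rw [← withDensity_inv_same₀ hf hf0 hft]
  infer_instance

theorem lintegral_lintegral_bounds {X Y : Type*} [MeasurableSpace X] [MeasurableSpace Y]
    {μ : Measure X} {ν : Measure Y} [SFinite μ] [SFinite ν] {k : X → Y → ℝ≥0∞}
    (hk : AEMeasurable (Function.uncurry k) (μ.prod ν)) {φ : Y → ℝ≥0∞} {C : ℝ≥0∞} (hC : C ≠ ⊤)
    (hup : ∀ᵐ y ∂ν, ∫⁻ x, k x y ∂μ ≤ C * φ y) (hlow : ∀ᵐ y ∂ν, φ y ≤ C * ∫⁻ x, k x y ∂μ) :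
    ∫⁻ x, ∫⁻ y, k x y ∂ν ∂μ ≤ C * ∫⁻ y, φ y ∂ν ∧
      ∫⁻ y, φ y ∂ν ≤ C * ∫⁻ x, ∫⁻ y, k x y ∂ν ∂μ := by
  rw [lintegral_lintegral_swap hk, ← lintegral_const_mul' _ _ hC, ← lintegral_const_mul' _ _ hC]
  exact ⟨lintegral_mono_ae hup, lintegral_mono_ae hlow⟩

theorem exists_one_le_ofReal_bounds {A : ℝ≥0∞} (hA : A ≠ ⊤) :
    ∃ C : ℝ, 1 ≤ C ∧ ∀ X S : ℝ≥0∞, X ≤ A * S → S ≤ A * X →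
      ENNReal.ofReal C⁻¹ * S ≤ X ∧ X ≤ ENNReal.ofReal C * S := by
  refine ⟨max 1 A.toReal, le_max_left _ _, fun X S h₁ h₂ => ?_⟩
  have h0 : 0 < max 1 A.toReal := zero_lt_one.trans_le (le_max_left _ _)
  have hAC : A ≤ ENNReal.ofReal (max 1 A.toReal) := by
    rw [← ENNReal.ofReal_toReal hA]
    exact ENNReal.ofReal_le_ofReal (by simp)
  refine ⟨?_, h₁.trans (by gcongr)⟩
  rw [ENNReal.ofReal_inv_of_pos h0, ENNReal.inv_mul_le_iff (by simp) ENNReal.ofReal_ne_top]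
  exact h₂.trans (by gcongr)

theorem stmt6 {N : ℕ} (hN : 3 ≤ N) (Ω : Set (EuclideanSpace ℝ (Fin N)))
    (hΩo : IsOpen Ω) (hΩb : Bornology.IsBounded Ω) (hΩ2 : HasC2Boundary Ω)
    (α αs : ℝ) (hα : 0 < α - 1/2) (hαs : α - 1/2 < αs) (hαs' : αs ≤ α)
    (Φ Φ₀ : EuclideanSpace ℝ (Fin N) → ℝ)
    (G : EuclideanSpace ℝ (Fin N) → EuclideanSpace ℝ (Fin N) → ℝ)
    (K : EuclideanSpace ℝ (Fin N) → EuclideanSpace ℝ (Fin N) → ℝ)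
    (hGm : Measurable (Function.uncurry G))
    (hGpos : ∀ x ∈ Ω, ∀ y ∈ Ω, x ≠ y → 0 < G x y)
    (a c₀ β₁ : ℝ) (ha : 2 ≤ a) (hc₀ : 1 ≤ c₀) (hβ₁ : 0 < β₁)
    -- (H1): two-sided boundary Green estimate near the diagonal
    (hG1 : ∀ β ∈ Set.Ioo (0:ℝ) β₁, ∀ x ∈ Ω, Metric.infDist x (frontier Ω) = β →
      ∀ y ∈ Ω, 0 < dist x y → dist x y < a * β →
        c₀⁻¹ * dist x y ^ ((2:ℝ) - N) * Φ y ≤ Φ x * G x y ∧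
        Φ x * G x y ≤ c₀ * dist x y ^ ((2:ℝ) - N) * Φ y)
    -- (H2): upper boundary Green estimate away from the diagonal
    (hG2 : ∀ β ∈ Set.Ioo (0:ℝ) β₁, ∀ x ∈ Ω, Metric.infDist x (frontier Ω) = β →
      ∀ y ∈ Ω, a * β ≤ dist x y →
        Φ x * G x y ≤ c₀ * β ^ (2 * αs) * dist x y ^ ((2:ℝ) - N - 2 * α) * Φ y)
    -- (H3): two-sided interior Green estimate
    (hG3 : ∀ b : ℝ, 0 < b → ∃ Cb : ℝ, 1 ≤ Cb ∧ ∀ x ∈ Ω, ∀ y ∈ Ω,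
      0 < dist x y →
      dist x y ≤ b⁻¹ * min (Metric.infDist x (frontier Ω)) (Metric.infDist y (frontier Ω)) →
      Cb⁻¹ * dist x y ^ ((2:ℝ) - N) ≤ G x y ∧ G x y ≤ Cb * dist x y ^ ((2:ℝ) - N))
    -- (H4): symmetry and comparison with the ground state near the boundary
    (hGsym : ∀ x ∈ Ω, ∀ y ∈ Ω, G x y = G y x)
    (hG4 : ∀ r : ℝ, 0 < r → ∃ Cr : ℝ, 0 < Cr ∧ ∀ x ∈ Ω, ∀ y ∈ Ω,
      r ≤ Metric.infDist y (frontier Ω) → Metric.infDist x (frontier Ω) < r / 2 →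
      G x y ≤ Cr * Φ x)
    -- (H5): condition (B2) on the ground state
    (hΦc : ContinuousOn Φ Ω) (hΦpos : ∀ x ∈ Ω, 0 < Φ x)
    (c₁ : ℝ) (hc₁ : 1 ≤ c₁)
    (hΦ : ∀ x ∈ Ω, Metric.infDist x (frontier Ω) < β₁ →
      c₁⁻¹ * Metric.infDist x (frontier Ω) ^ α ≤ Φ x ∧
      Φ x ≤ c₁ * Metric.infDist x (frontier Ω) ^ αs)
    -- (H6): `Φ₀ ∼ δ`
    (cs : ℝ) (hcs : 1 ≤ cs)
    (hΦ₀ : ∀ x ∈ Ω, cs⁻¹ * Metric.infDist x (frontier Ω) ≤ Φ₀ x ∧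
      Φ₀ x ≤ cs * Metric.infDist x (frontier Ω))
    (hΦ₀pos : ∀ x ∈ Ω, 0 < Φ₀ x)
    -- (H7): Martin kernel bound
    (hKc : ContinuousOn (Function.uncurry K) (Ω ×ˢ frontier Ω))
    (hKpos : ∀ x ∈ Ω, ∀ y ∈ frontier Ω, 0 < K x y)
    (C₀ ε : ℝ) (hC₀ : 1 ≤ C₀) (hε : 0 < ε)
    (hKbound : ∀ y ∈ frontier Ω, ∀ β ∈ Set.Ioo (0:ℝ) ε,
      ENNReal.ofReal C₀⁻¹ ≤
        (∫⁻ x in {x ∈ Ω | Metric.infDist x (frontier Ω) = β},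
          ENNReal.ofReal (Φ x / Φ₀ x * K x y) ∂(μH[(N:ℝ) - 1])) ∧
      (∫⁻ x in {x ∈ Ω | Metric.infDist x (frontier Ω) = β},
          ENNReal.ofReal (Φ x / Φ₀ x * K x y) ∂(μH[(N:ℝ) - 1])) ≤ ENNReal.ofReal C₀) :
    -- conclusion: two-sided weighted estimate of `u = G[τ] + K[ν]`
    ∃ C : ℝ, 1 ≤ C ∧
      ∀ (τ ν : Measure (EuclideanSpace ℝ (Fin N))), τ Ωᶜ = 0 →
        (∫⁻ x in Ω, ENNReal.ofReal (Φ x) ∂τ) < ⊤ →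
        IsFiniteMeasure ν → ν (frontier Ω)ᶜ = 0 →
        ∀ u : EuclideanSpace ℝ (Fin N) → ℝ≥0∞,
          (∀ x ∈ Ω, u x = (∫⁻ y in Ω, ENNReal.ofReal (G x y) ∂τ) +
            (∫⁻ y in frontier Ω, ENNReal.ofReal (K x y) ∂ν)) →
          ENNReal.ofReal C⁻¹ *
              ((∫⁻ x in Ω, ENNReal.ofReal (Φ x) ∂τ) + ν (frontier Ω)) ≤
            (∫⁻ x in Ω, ENNReal.ofReal (Φ x / Φ₀ x) * u x ∂volume) ∧
          (∫⁻ x in Ω, ENNReal.ofReal (Φ x / Φ₀ x) * u x ∂volume) ≤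
            ENNReal.ofReal C *
              ((∫⁻ x in Ω, ENNReal.ofReal (Φ x) ∂τ) + ν (frontier Ω)) := by
  rcases Ω.eq_empty_or_nonempty with rfl | hΩne
  · exact ⟨1, le_rfl, fun τ ν _ _ _ _ u _ => by simp⟩
  have hfin : Module.finrank ℝ (EuclideanSpace ℝ (Fin N)) = N := finrank_euclideanSpace_fin
  have : Nontrivial (EuclideanSpace ℝ (Fin N)) :=
    Module.nontrivial_of_finrank_pos (R := ℝ) (by omega)
  have hne : (frontier Ω).Nonempty := by
    refine nonempty_frontier_iff.2 ⟨hΩne, ?_⟩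
    rintro rfl
    exact NormedSpace.unbounded_univ ℝ (EuclideanSpace ℝ (Fin N)) hΩb
  have hc : IsCompact (frontier Ω) :=
    hΩb.isCompact_closure.of_isClosed_subset isClosed_frontier frontier_subset_closure
  have hδpos (x) (hx : x ∈ Ω) := infDist_frontier_pos hΩo hne hx
  have hcs0 : 0 < cs := by linarith
  set w : EuclideanSpace ℝ (Fin N) → ℝ := fun x => Φ x / infDist x (frontier Ω) with hw
  have hwc : ContinuousOn w Ω :=
    hΦc.div (continuous_infDist_pt _).continuousOn fun x hx => (hδpos x hx).ne'
  have hw0 (x) (hx : x ∈ Ω) : 0 < w x := div_pos (hΦpos x hx) (hδpos x hx)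
  have hWw (x) (hx : x ∈ Ω) : Φ x / Φ₀ x ≤ cs * w x := by
    have h1 := hΦ₀pos x hx
    have h2 := hδpos x hx
    have h3 := hΦpos x hx
    rw [hw, div_le_iff₀ h1]
    calc Φ x = cs * (Φ x / infDist x (frontier Ω)) * (cs⁻¹ * infDist x (frontier Ω)) := by
          field_simp
      _ ≤ _ := by gcongr; exact (hΦ₀ x hx).1
  have hwW (x) (hx : x ∈ Ω) : w x ≤ cs * (Φ x / Φ₀ x) := by
    have h1 := hΦ₀pos x hx
    have h2 := hδpos x hx
    have h3 := hΦpos x hx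
    rw [hw, div_le_iff₀ h2]
    calc Φ x = Φ x / Φ₀ x * Φ₀ x := by field_simp
      _ ≤ Φ x / Φ₀ x * (cs * infDist x (frontier Ω)) := by gcongr; exact (hΦ₀ x hx).2
      _ = _ := by ring
  have hsl (β : ℝ) : MeasurableSet {x ∈ Ω | infDist x (frontier Ω) = β} :=
    hΩo.measurableSet.inter
      (measurableSet_eq_fun (continuous_infDist_pt _).measurable measurable_const)
  obtain ⟨C₁, hC₁, hGup⟩ := hΩ2.exists_green_integral_le hN hΩo hΩb hne hc hα hαs hαs' ha hc₀ hβ₁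
    (fun β hβ x hx hxβ y hy h h' => (hG1 β hβ x hx hxβ y hy h h').2) hG2
    (fun b hb => (hG3 b hb).imp fun Cb h => ⟨h.1, fun x hx y hy h1 h2 => (h.2 x hx y hy h1 h2).2⟩)
    hGsym hG4 hΦc hΦpos
  obtain ⟨C₂, hC₂, hGlow⟩ := hΩ2.exists_le_green_integral hN hΩo hΩb hne hc hGpos ha hc₀ hβ₁
    (fun β hβ x hx hxβ y hy h h' => (hG1 β hβ x hx hxβ y hy h h').1)
    (fun b hb => (hG3 b hb).imp fun Cb h => ⟨h.1, fun x hx y hy h1 h2 => (h.2 x hx y hy h1 h2).1⟩)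
    hΦc hΦpos
  obtain ⟨C₃, hC₃, hK3⟩ := hΩ2.exists_martin_integral_bounds (by omega) hΩo hΩb hne hc hwc hKc
    (m₁ := (ENNReal.ofReal cs)⁻¹ * ENNReal.ofReal C₀⁻¹)
    (m₂ := ENNReal.ofReal cs * ENNReal.ofReal C₀)
    (mul_ne_zero (by simp) (by simp; linarith)) (by finiteness) (by finiteness) hε (by
      intro y hy β hβ
      obtain ⟨h1, h2⟩ := hKbound y hy β hβ
      constructor
      · rw [ENNReal.inv_mul_le_iff (by simpa using hcs0) ENNReal.ofReal_ne_top]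
        refine h1.trans ?_
        rw [← lintegral_const_mul' _ _ ENNReal.ofReal_ne_top]
        refine setLIntegral_mono' (hsl β) fun x hx => ?_
        rw [← ENNReal.ofReal_mul hcs0.le, ← mul_assoc]
        refine ENNReal.ofReal_le_ofReal ?_
        have := hKpos x hx.1 y hy
        gcongr
        exact hWw x hx.1
      · refine le_trans ?_ (mul_le_mul_right h2 _)
        rw [← lintegral_const_mul' _ _ ENNReal.ofReal_ne_top]
        refine setLIntegral_mono' (hsl β) fun x hx => ?_
        rw [← ENNReal.ofReal_mul hcs0.le, ← mul_assoc]
        refine ENNReal.ofReal_le_ofReal ?_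
        have := hKpos x hx.1 y hy
        gcongr
        exact hwW x hx.1)
  set A : ℝ≥0∞ := C₁ + C₂ + C₃
  have hA1 : C₁ ≤ A := le_self_add.trans le_self_add
  have hA2 : C₂ ≤ A := le_add_self.trans le_self_add
  have hA3 : C₃ ≤ A := le_add_self
  have hAt : A ≠ ⊤ := by finiteness
  obtain ⟨C, hC, hCb⟩ := exists_one_le_ofReal_bounds
    (ENNReal.mul_ne_top (ENNReal.ofReal_ne_top (r := cs)) hAt)
  refine ⟨C, hC, fun τ ν _ hτΦ hν _ u hu => ?_⟩
  have hwm : AEMeasurable w (volume.restrict Ω) :=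
    hwc.aemeasurable hΩo.measurableSet
  have hfm : MeasurableSet (frontier Ω) := isClosed_frontier.measurableSet
  have : SFinite (τ.restrict Ω) := sFinite_of_lintegral_ne_top
    (hΦc.aemeasurable hΩo.measurableSet).ennreal_ofReal
    ((ae_restrict_iff' hΩo.measurableSet).2 (.of_forall fun x hx => by simpa using hΦpos x hx))
    (.of_forall fun x => ENNReal.ofReal_ne_top) hτΦ.ne
  have hkG : AEMeasurable (Function.uncurry fun x y => ENNReal.ofReal (w x * G x y))
      ((volume.restrict Ω).prod (τ.restrict Ω)) :=
    (hwm.comp_fst.mul hGm.aemeasurable).ennreal_ofReal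
  have hkK : AEMeasurable (Function.uncurry fun x y => ENNReal.ofReal (w x * K x y))
      ((volume.restrict Ω).prod (ν.restrict (frontier Ω))) := by
    refine (hwm.comp_fst.mul ?_).ennreal_ofReal
    rw [Measure.prod_restrict]
    exact hKc.aemeasurable (hΩo.measurableSet.prod hfm)
  obtain ⟨hG, hG'⟩ := lintegral_lintegral_bounds hkG (φ := fun y => ENNReal.ofReal (Φ y)) hAt
    ((ae_restrict_iff' hΩo.measurableSet).2
      (.of_forall fun y hy => (hGup y hy).trans (mul_le_mul_left hA1 _)))
    ((ae_restrict_iff' hΩo.measurableSet).2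
      (.of_forall fun y hy => (hGlow y hy).trans (mul_le_mul_left hA2 _)))
  obtain ⟨hK, hK'⟩ := lintegral_lintegral_bounds hkK (φ := fun _ => 1) hAt
    ((ae_restrict_iff' hfm).2
      (.of_forall fun y hy => by simpa using (hK3 y hy).2.trans hA3))
    ((ae_restrict_iff' hfm).2
      (.of_forall fun y hy => (hK3 y hy).1.trans (mul_le_mul_left hA3 _)))
  rw [setLIntegral_const, one_mul] at hK hK'
  have hsplit : ∫⁻ x in Ω, ENNReal.ofReal (w x) * u x =
      (∫⁻ x in Ω, ∫⁻ y in Ω, ENNReal.ofReal (w x * G x y) ∂τ) +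
        ∫⁻ x in Ω, ∫⁻ y in frontier Ω, ENNReal.ofReal (w x * K x y) ∂ν := by
    have hm : AEMeasurable (fun x => ∫⁻ y in Ω, ENNReal.ofReal (w x * G x y) ∂τ)
        (volume.restrict Ω) := hkG.lintegral_prod_right'
    rw [← lintegral_add_left' hm]
    refine setLIntegral_congr_fun hΩo.measurableSet fun x hx => ?_
    simp only [hu x hx, mul_add, ENNReal.ofReal_mul (hw0 x hx).le]
    rw [lintegral_const_mul' _ _ ENNReal.ofReal_ne_top,
      lintegral_const_mul' _ _ ENNReal.ofReal_ne_top]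
  have hWu : ∫⁻ x in Ω, ENNReal.ofReal (Φ x / Φ₀ x) * u x ≤
      ENNReal.ofReal cs * ∫⁻ x in Ω, ENNReal.ofReal (w x) * u x := by
    rw [← lintegral_const_mul' _ _ ENNReal.ofReal_ne_top]
    refine setLIntegral_mono' hΩo.measurableSet fun x hx => ?_
    rw [← mul_assoc, ← ENNReal.ofReal_mul hcs0.le]
    gcongr
    exact hWw x hx
  have huW : ∫⁻ x in Ω, ENNReal.ofReal (w x) * u x ≤
      ENNReal.ofReal cs * ∫⁻ x in Ω, ENNReal.ofReal (Φ x / Φ₀ x) * u x := by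
    rw [← lintegral_const_mul' _ _ ENNReal.ofReal_ne_top]
    refine setLIntegral_mono' hΩo.measurableSet fun x hx => ?_
    rw [← mul_assoc, ← ENNReal.ofReal_mul hcs0.le]
    gcongr
    exact hwW x hx
  refine hCb _ _ (hWu.trans ?_) ?_
  · rw [hsplit, mul_assoc, mul_add A]
    gcongr
  · calc _ ≤ A * ∫⁻ x in Ω, ENNReal.ofReal (w x) * u x := by
          rw [hsplit, mul_add]; exact add_le_add hG' hK'
      _ ≤ _ := by rw [mul_comm (ENNReal.ofReal cs), mul_assoc]; gcongr
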